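/- Remark 2.6 (universality with varying center): Let 𝕄 be an infinite subset of ℕ, let Ω ⊆ ℂⁿ be an open convex set, let (K_m)_{m≥1} be a sequence of compact convex subsets of ℂⁿ each disjoint from Ω, and let (N_j)_{j≥0} be any enumeration of ℕⁿ. Then there exists a holomorphic function f on Ω such that: for every compact convex set K ⊆ ℂⁿ which is either disjoint from the closure of Ω or equal to some K_m, and for every holomorphic polynomial P on ℂⁿ, there exists a sequence (λ_N)_{N≥1} with λ_N ∈ 𝕄 such that for every compact set L ⊆ Ω, sup_{ζ ∈ L, z ∈ K} ‖S_{λ_N}(f,ζ)(z) − P(z)‖ → 0 and sup_{ζ ∈ L, z ∈ L} ‖S_{λ_N}(f,ζ)(z) − f(z)‖ → 0 as N → ∞. The set of such f is a dense G_δ subset of O(Ω) with the topology of uniform convergence on compacta. -/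

import Mathlib

open Set Filter Topology

noncomputable section

/-- Evaluation of a multivariate polynomial as a function on `ℂⁿ = Fin n → ℂ`. -/
def mvEval {n : ℕ} (p : MvPolynomial (Fin n) ℂ) : (Fin n → ℂ) → ℂ :=
  fun z => MvPolynomial.eval z p

/-- The polynomially convex hull of a set in `ℂⁿ`. -/
def polyHull {n : ℕ} (K : Set (Fin n → ℂ)) : Set (Fin n → ℂ) :=
  {z | ∀ p : MvPolynomial (Fin n) ℂ, ‖mvEval p z‖ ≤ sSup ((fun w => ‖mvEval p w‖) '' K)}

/-- A set in `ℂⁿ` is polynomially convex if it equals its polynomially convex hull. -/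
def IsPolyConvex {n : ℕ} (K : Set (Fin n → ℂ)) : Prop := polyHull K = K

/-- The polynomially convex hull of a subset of `ℂ`. -/
def polyHull1 (F : Set ℂ) : Set ℂ :=
  {z | ∀ p : Polynomial ℂ, ‖p.eval z‖ ≤ sSup ((fun w => ‖p.eval w‖) '' F)}

/-- A subset of `ℂ` is polynomially convex if it equals its polynomially convex hull. -/
def IsPolyConvex1 (F : Set ℂ) : Prop := polyHull1 F = F

/-- Partial derivative in the `i`-th coordinate direction. -/
def pd {n : ℕ} (i : Fin n) (f : (Fin n → ℂ) → ℂ) : (Fin n → ℂ) → ℂ :=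
  fun z => fderiv ℂ f z (Pi.single i 1)

/-- Iterated partial derivative `D^ℓ = ∂^{ℓ₁+⋯+ℓₙ}/∂z₁^{ℓ₁}⋯∂zₙ^{ℓₙ}`. -/
def Dml {n : ℕ} (ℓ : Fin n → ℕ) (f : (Fin n → ℂ) → ℂ) : (Fin n → ℂ) → ℂ :=
  (List.finRange n).foldr (fun i g => (pd i)^[ℓ i] g) f

/-- Partial sums `S_λ` of a Taylor-type series around `ζ`, with coefficients computed from a
given family `g` of (extended) partial derivatives: the coefficient of the monomial
`(z-ζ)^{N_j}` is `g (N_j) ζ / (N_{j,1}! ⋯ N_{j,n}!)`. -/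
def pSumExt {n : ℕ} (Nj : ℕ → Fin n → ℕ) (g : (Fin n → ℕ) → (Fin n → ℂ) → ℂ)
    (ζ : Fin n → ℂ) (lam : ℕ) : (Fin n → ℂ) → ℂ :=
  fun z => ∑ j ∈ Finset.range (lam + 1),
    (((∏ i, Nat.factorial (Nj j i) : ℕ) : ℂ))⁻¹ * g (Nj j) ζ * ∏ i, (z i - ζ i) ^ (Nj j i)

/-- Partial sums `S_λ(f,ζ)` of the Taylor development of `f` around `ζ`. -/
def pSum {n : ℕ} (Nj : ℕ → Fin n → ℕ) (f : (Fin n → ℂ) → ℂ)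
    (ζ : Fin n → ℂ) (lam : ℕ) : (Fin n → ℂ) → ℂ :=
  pSumExt Nj (fun ℓ => Dml ℓ f) ζ lam

/-- The space `O(Ω)` of holomorphic functions on `Ω`. -/
def Ospace (n : ℕ) (Ω : Set (Fin n → ℂ)) : Type :=
  {f : (Fin n → ℂ) → ℂ // DifferentiableOn ℂ f Ω}

/-- Topology of uniform convergence on compact subsets of `Ω` on `O(Ω)` (the compact-open
topology induced via restriction to `Ω`). -/
instance (n : ℕ) (Ω : Set (Fin n → ℂ)) : TopologicalSpace (Ospace n Ω) :=
  TopologicalSpace.induced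
    (fun f : Ospace n Ω =>
      (⟨Ω.restrict f.1, continuousOn_iff_continuous_restrict.mp f.2.continuousOn⟩ : C(Ω, ℂ)))
    inferInstance

/-- Membership in `A^∞(Ω)`: `f` is holomorphic on `Ω` and each partial derivative `D^ℓ f`
extends continuously to the closure of `Ω`. -/
def AinfMem (n : ℕ) (Ω : Set (Fin n → ℂ)) (f : (Fin n → ℂ) → ℂ) : Prop :=
  DifferentiableOn ℂ f Ω ∧
    ∀ ℓ : Fin n → ℕ, ∃ g : (Fin n → ℂ) → ℂ,
      ContinuousOn g (closure Ω) ∧ Set.EqOn g (Dml ℓ f) Ω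

/-- The space `A^∞(Ω)`. -/
def AinfSpace (n : ℕ) (Ω : Set (Fin n → ℂ)) : Type :=
  {f : (Fin n → ℂ) → ℂ // AinfMem n Ω f}

/-- The chosen continuous extension of `D^ℓ f` to the closure of `Ω`, for `f ∈ A^∞(Ω)`.
(Its restriction to the closure of `Ω` is uniquely determined.) -/
def AinfExt {n : ℕ} {Ω : Set (Fin n → ℂ)} (f : AinfSpace n Ω) (ℓ : Fin n → ℕ) :
    (Fin n → ℂ) → ℂ :=
  Classical.choose (f.2.2 ℓ)

lemma AinfExt_continuousOn {n : ℕ} {Ω : Set (Fin n → ℂ)} (f : AinfSpace n Ω) (ℓ : Fin n → ℕ) :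
    ContinuousOn (AinfExt f ℓ) (closure Ω) :=
  (Classical.choose_spec (f.2.2 ℓ)).1

lemma AinfExt_eqOn {n : ℕ} {Ω : Set (Fin n → ℂ)} (f : AinfSpace n Ω) (ℓ : Fin n → ℕ) :
    Set.EqOn (AinfExt f ℓ) (Dml ℓ f.1) Ω :=
  (Classical.choose_spec (f.2.2 ℓ)).2

/-- Topology on `A^∞(Ω)`: uniform convergence of every partial derivative on every compact
subset of the closure of `Ω`. -/
instance (n : ℕ) (Ω : Set (Fin n → ℂ)) : TopologicalSpace (AinfSpace n Ω) :=
  TopologicalSpace.induced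
    (fun f : AinfSpace n Ω => fun ℓ : Fin n → ℕ =>
      (⟨(closure Ω).restrict (AinfExt f ℓ),
        continuousOn_iff_continuous_restrict.mp (AinfExt_continuousOn f ℓ)⟩ :
          C(closure Ω, ℂ)))
    inferInstance

/-- A smooth compact curve in `ℂⁿ`: the image of an injective `C^∞` map with
nowhere-vanishing derivative, defined on a compact interval (an arc) or on the
circle (a closed curve, modelled by a 1-periodic map). -/
def IsSmoothCompactCurve {n : ℕ} (K : Set (Fin n → ℂ)) : Prop :=
  ∃ γ : ℝ → (Fin n → ℂ), ContDiff ℝ (⊤ : ℕ∞) γ ∧ (∀ t, deriv γ t ≠ 0) ∧ K = γ '' Set.Icc 0 1 ∧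
    (Set.InjOn γ (Set.Icc 0 1) ∨ (Function.Periodic γ 1 ∧ Set.InjOn γ (Set.Ico 0 1)))

/-- A disjoint union of finitely many smooth compact curves. -/
def IsFiniteUnionOfSmoothCurves {n : ℕ} (K : Set (Fin n → ℂ)) : Prop :=
  ∃ (m : ℕ) (C : Fin m → Set (Fin n → ℂ)),
    (∀ i, IsSmoothCompactCurve (C i)) ∧ Pairwise (Function.onFun Disjoint C) ∧ K = ⋃ i, C i

/-!
The Taylor partial sums of a polynomial `Q` eventually equal `Q`, whatever the center. Hence, once
some polynomial `Q` is close to `f` on a compact `L ⊆ Ω` and close to `P` on `K`, the functions with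
one good partial sum for `(L, K, P)` are dense in `O(Ω)`; they form an open set because
`S_λ(f, ζ)(z)` is jointly continuous in `(f, ζ, z)`. Countably many triples `(L, K, P)` matter, and
`O(Ω)` is a Baire space.

To find `Q`, note that `τ ↦ f (z₀ + τ (z - z₀))` is holomorphic with values in `C(L, ℂ)` and that
its derivatives at `τ = 0` are polynomials in `z`, so analytic continuation along `[0, 1]` leaves it
in the closure of the polynomials: this gives a polynomial `G` close to `f` on `L`. A complex linear
form separates `L` from `K`; composing it with a one-variable polynomial that is small on the left
and close to `1` on the right gives `H`, and `Q = G + (P - G) H`. The one-variable polynomial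
approximates `(1 + w) ^ m / ((1 + w) ^ m + (1 - w) ^ m)`, all of whose poles lie on the imaginary
axis, an unbounded connected set from which they can be pushed to infinity.
-/

section UniformConvergence

open Metric

variable {ι X α : Type*} [UniformSpace α] {l : Filter ι} {f : ι → X → α} {g : X → α}

lemma tendstoUniformlyOnFilter_of_tendsto [TopologicalSpace X] {x : X}
    (hg : ContinuousAt g x)
    (h : Tendsto (fun p : ι × X => f p.1 p.2) (l ×ˢ 𝓝 x) (𝓝 (g x))) :
    TendstoUniformlyOnFilter f g l (𝓝 x) := by
  rw [tendstoUniformlyOnFilter_iff_tendsto]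
  refine Tendsto.mono_right ?_ (nhds_le_uniformity (g x))
  rw [nhds_prod_eq]
  exact (hg.tendsto.comp tendsto_snd).prodMk h

lemma exists_tendstoUniformlyOn_thickening [PseudoMetricSpace X] [ProperSpace X] {s K : Set X}
    (hs : IsOpen s) (h : TendstoLocallyUniformlyOn f g l s) (hK : IsCompact K) (hKs : K ⊆ s) :
    ∃ r > 0, thickening r K ⊆ s ∧ TendstoUniformlyOn f g l (thickening r K) := by
  obtain ⟨r, hr, hrs⟩ := hK.exists_cthickening_subset_open hs hKs
  have hsub : thickening r K ⊆ cthickening r K := thickening_subset_cthickening r K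
  exact ⟨r, hr, hsub.trans hrs,
    ((tendstoLocallyUniformlyOn_iff_forall_isCompact hs).1 h _ hrs hK.cthickening).mono hsub⟩

end UniformConvergence

section HolomorphicLimits

open Metric

variable {ι E F : Type*} {l : Filter ι} {s K : Set E} {r : ℝ}
variable [NormedAddCommGroup E] [NormedSpace ℂ E] [NormedAddCommGroup F] [NormedSpace ℂ F]

lemma norm_fderiv_sub_fderiv_le {f g : E → F} {c : E} {M : ℝ} (hr : 0 < r)
    (hf : DifferentiableOn ℂ f (ball c r)) (hg : DifferentiableOn ℂ g (ball c r))
    (hM : ∀ z ∈ ball c r, ‖f z - g z‖ ≤ M) : ‖fderiv ℂ f c - fderiv ℂ g c‖ ≤ 2 * M / r := by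
  have hc : ball c r ∈ 𝓝 c := ball_mem_nhds c hr
  rw [← fderiv_sub (hf.differentiableAt hc) (hg.differentiableAt hc)]
  refine Complex.norm_fderiv_le_div_of_mapsTo_ball (hf.sub hg) (fun z hz => ?_) hr
  rw [mem_closedBall, dist_eq_norm, two_mul]
  exact (norm_sub_le _ _).trans (add_le_add (hM z hz) (hM c (mem_ball_self hr)))

lemma dist_fderiv_lt_of_thickening {f g : E → F} {ε : ℝ} (hr : 0 < r) (hε : 0 < ε)
    (hf : DifferentiableOn ℂ f (thickening r K)) (hg : DifferentiableOn ℂ g (thickening r K))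
    (h : ∀ z ∈ thickening r K, dist (f z) (g z) < ε * r / 4) {c : E} (hc : c ∈ K) :
    dist (fderiv ℂ f c) (fderiv ℂ g c) < ε := by
  have hball : ball c r ⊆ thickening r K := ball_subset_thickening hc r
  rw [dist_eq_norm]
  refine (norm_fderiv_sub_fderiv_le hr (hf.mono hball) (hg.mono hball)
    fun z hz => (dist_eq_norm (f z) (g z) ▸ h z (hball hz)).le).trans_lt ?_
  rw [div_lt_iff₀ hr]
  nlinarith [mul_pos hε hr]

lemma uniformCauchySeqOn_fderiv {f : ι → E → F} (hr : 0 < r)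
    (hf : ∀ᶠ i in l, DifferentiableOn ℂ (f i) (thickening r K))
    (h : UniformCauchySeqOn f l (thickening r K)) :
    UniformCauchySeqOn (fun i => fderiv ℂ (f i)) l K := by
  intro u hu
  obtain ⟨ε, hε, hεu⟩ := mem_uniformity_dist.1 hu
  filter_upwards [h _ (dist_mem_uniformity (show 0 < ε * r / 4 by positivity)), hf.prod_mk hf]
    with i hi hfi c hc
  exact hεu (dist_fderiv_lt_of_thickening hr hε hfi.1 hfi.2 hi hc)

lemma tendstoUniformlyOn_fderiv {f : ι → E → F} {g : E → F} (hr : 0 < r)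
    (hf : ∀ᶠ i in l, DifferentiableOn ℂ (f i) (thickening r K))
    (hg : DifferentiableOn ℂ g (thickening r K))
    (h : TendstoUniformlyOn f g l (thickening r K)) :
    TendstoUniformlyOn (fun i => fderiv ℂ (f i)) (fderiv ℂ g) l K := by
  rw [tendstoUniformlyOn_iff] at h ⊢
  intro ε hε
  filter_upwards [h (ε * r / 4) (by positivity), hf] with i hi hfi c hc
  exact dist_fderiv_lt_of_thickening hr hε hg hfi hi hc

lemma tendsto_difference_quotient {f : E → F} {f' : E →L[ℂ] F} {x : E}
    (hf : HasStrictFDerivAt f f' x) (v : E) :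
    Tendsto (fun p : ℂ × E => p.1⁻¹ • (f (p.2 + p.1 • v) - f p.2)) (𝓝[≠] 0 ×ˢ 𝓝 x)
      (𝓝 (f' v)) := by
  have hpair : Tendsto (fun p : ℂ × E => (p.2 + p.1 • v, p.2)) (𝓝[≠] 0 ×ˢ 𝓝 x) (𝓝 (x, x)) := by
    refine Tendsto.mono_left ?_ (prod_mono_left _ nhdsWithin_le_nhds)
    rw [← nhds_prod_eq]
    exact Continuous.tendsto' (by fun_prop) _ _ (by simp)
  have hlittle := hf.isLittleO.comp_tendsto hpair
  have hne : ∀ᶠ p : ℂ × E in 𝓝[≠] 0 ×ˢ 𝓝 x, p.1 ≠ 0 :=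
    tendsto_fst.eventually eventually_mem_nhdsWithin
  have hbig : (fun p : ℂ × E => p.1 • v) =O[𝓝[≠] 0 ×ˢ 𝓝 x] fun p => p.1 :=
    Asymptotics.isBigO_of_le' (c := ‖v‖) _ fun p => by rw [norm_smul, mul_comm]
  have hzero : Tendsto (fun p : ℂ × E => p.1⁻¹ • (f (p.2 + p.1 • v) - f p.2 - f' (p.1 • v)))
      (𝓝[≠] 0 ×ˢ 𝓝 x) (𝓝 0) := by
    refine Asymptotics.IsLittleO.tendsto_inv_smul_nhds_zero ?_
    refine Asymptotics.IsLittleO.trans_isBigO ?_ hbig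
    simpa [Function.comp_def] using hlittle
  have hlim := hzero.add_const (f' v)
  rw [zero_add] at hlim
  refine hlim.congr' ?_
  filter_upwards [hne] with p hp
  rw [smul_sub, map_smul, inv_smul_smul₀ hp, sub_add_cancel]

variable [ProperSpace E]

theorem differentiableOn_of_tendstoLocallyUniformlyOn [CompleteSpace F] [NeBot l] {f : ι → E → F}
    {g : E → F} (hs : IsOpen s) (hf : ∀ᶠ i in l, DifferentiableOn ℂ (f i) s)
    (h : TendstoLocallyUniformlyOn f g l s) : DifferentiableOn ℂ g s := by
  intro x hx
  obtain ⟨ρ, hρ, hρs⟩ := Metric.isOpen_iff.1 hs x hx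
  have hball : closedBall x (ρ / 2) ⊆ s := (closedBall_subset_ball (by linarith)).trans hρs
  obtain ⟨r, hr, hrs, hunif⟩ :=
    exists_tendstoUniformlyOn_thickening hs h (isCompact_closedBall x (ρ / 2)) hball
  have hcauchy : UniformCauchySeqOn (fun i => fderiv ℂ (f i)) l (closedBall x (ρ / 2)) :=
    uniformCauchySeqOn_fderiv hr (hf.mono fun _ hfi => hfi.mono hrs) hunif.uniformCauchySeqOn
  have hlim : ∀ y, ∃ f', y ∈ closedBall x (ρ / 2) → Tendsto (fun i => fderiv ℂ (f i) y) l (𝓝 f') :=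
    fun y => by
      by_cases hy : y ∈ closedBall x (ρ / 2)
      · exact (CompleteSpace.complete (hcauchy.cauchy_map hy)).imp fun _ h _ => h
      · exact ⟨0, fun h => absurd h hy⟩
  choose g' hg' using hlim
  have hnhds : closedBall x (ρ / 2) ∈ 𝓝 x := closedBall_mem_nhds x (half_pos hρ)
  have hderiv : HasFDerivAt g (g' x) x := by
    refine hasFDerivAt_of_tendstoUniformlyOnFilter (l := l) (f := f)
      (f' := fun i => fderiv ℂ (f i)) ?_ ?_ ?_
    · exact (hcauchy.tendstoUniformlyOn_of_tendsto hg').tendstoUniformlyOnFilter.mono_right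
        (le_principal_iff.2 hnhds)
    · filter_upwards [hf.prod_mk hnhds] with p hp
      exact (hp.1.differentiableAt (hs.mem_nhds (hball hp.2))).hasFDerivAt
    · filter_upwards [hnhds] with y hy using h.tendsto_at (hball hy)
  exact hderiv.differentiableAt.differentiableWithinAt

theorem tendstoLocallyUniformlyOn_fderiv {f : ι → E → F} {g : E → F} (hs : IsOpen s)
    (hf : ∀ᶠ i in l, DifferentiableOn ℂ (f i) s) (hg : DifferentiableOn ℂ g s)
    (h : TendstoLocallyUniformlyOn f g l s) :
    TendstoLocallyUniformlyOn (fun i => fderiv ℂ (f i)) (fderiv ℂ g) l s := by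
  refine (tendstoLocallyUniformlyOn_iff_forall_isCompact hs).2 fun K hKs hK => ?_
  obtain ⟨r, hr, hrs, hunif⟩ := exists_tendstoUniformlyOn_thickening hs h hK hKs
  exact tendstoUniformlyOn_fderiv hr (hf.mono fun _ hfi => hfi.mono hrs) (hg.mono hrs) hunif

theorem continuousOn_fderiv_of_differentiableOn {f : E → F} (hs : IsOpen s)
    (hf : DifferentiableOn ℂ f s) : ContinuousOn (fderiv ℂ f) s := by
  intro x hx
  refine ContinuousAt.continuousWithinAt ?_
  obtain ⟨ρ, hρ, hρs⟩ := Metric.isOpen_iff.1 hs x hx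
  obtain ⟨r, hr, hrρ⟩ : ∃ r > 0, 2 * r < ρ := ⟨ρ / 3, by positivity, by linarith⟩
  have huc := (isCompact_closedBall x (2 * r)).uniformContinuousOn_of_continuous
    (hf.continuousOn.mono ((closedBall_subset_ball hrρ).trans hρs))
  rw [Metric.continuousAt_iff]
  intro ε hε
  obtain ⟨δ, hδ, hδf⟩ := Metric.uniformContinuousOn_iff.1 huc (ε * r / 4) (by positivity)
  refine ⟨min δ r, lt_min hδ hr, fun {y} hy => ?_⟩
  obtain ⟨hyδ, hyr⟩ := lt_min_iff.1 hy
  have htrans : ∀ z ∈ ball x r, z + (y - x) ∈ ball x (2 * r) := fun z hz => by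
    rw [mem_ball, dist_eq_norm] at hz ⊢
    rw [dist_eq_norm] at hyr
    calc ‖z + (y - x) - x‖ = ‖(z - x) + (y - x)‖ := by congr 1; abel
      _ < 2 * r := (norm_add_le _ _).trans_lt (by linarith)
  have hmem : ∀ z ∈ ball x r, z ∈ ball x (2 * r) := fun z hz =>
    ball_subset_ball (by linarith) hz
  have hball : ball x (2 * r) ⊆ s := (ball_subset_ball hrρ.le).trans hρs
  have hderiv : fderiv ℂ (fun z => f (z + (y - x))) x = fderiv ℂ f y := by
    rw [fderiv_comp_add_right, add_sub_cancel]
  rw [← hderiv]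
  refine dist_fderiv_lt_of_thickening (K := {x}) hr hε ?_ ?_ ?_ rfl <;> rw [thickening_singleton]
  · exact (hf.comp (by fun_prop) fun z hz => hball (htrans z hz))
  · exact hf.mono fun z hz => hball (hmem z hz)
  · exact fun z hz => hδf _ (ball_subset_closedBall (htrans z hz)) _
      (ball_subset_closedBall (hmem z hz)) (by simpa [dist_eq_norm] using hyδ)

variable [CompleteSpace F]

theorem differentiableOn_fderiv_apply {f : E → F} (hs : IsOpen s)
    (hf : DifferentiableOn ℂ f s) (v : E) : DifferentiableOn ℂ (fun z => fderiv ℂ f z v) s := by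
  have hcont : ContinuousOn (fderiv ℂ f) s := continuousOn_fderiv_of_differentiableOn hs hf
  have hquot : TendstoLocallyUniformlyOn (fun (t : ℂ) z => t⁻¹ • (f (z + t • v) - f z))
      (fun z => fderiv ℂ f z v) (𝓝[≠] 0) s := by
    refine tendstoLocallyUniformlyOn_iff_filter.2 fun x hx => ?_
    have hx' := hs.mem_nhds hx
    rw [hs.nhdsWithin_eq hx]
    refine tendstoUniformlyOnFilter_of_tendsto ((hcont.continuousAt hx').clm_apply
      continuousAt_const) (tendsto_difference_quotient ?_ v)
    exact hasStrictFDerivAt_of_hasFDerivAt_of_continuousAt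
      ((hf.eventually_differentiableAt hx').mono fun _ h => h.hasFDerivAt)
      (hcont.continuousAt hx')
  intro x hx
  obtain ⟨ρ, hρ, hρs⟩ := Metric.isOpen_iff.1 hs x hx
  have hball : ball x (ρ / 2) ⊆ s := (ball_subset_ball (by linarith)).trans hρs
  have hsmall : ∀ᶠ t : ℂ in 𝓝[≠] 0, ‖t • v‖ < ρ / 2 :=
    (Continuous.tendsto' (by fun_prop) _ _ (by simp)).mono_left nhdsWithin_le_nhds
      |>.eventually_lt_const (half_pos hρ)
  refine ((differentiableOn_of_tendstoLocallyUniformlyOn isOpen_ball (hsmall.mono fun t ht => ?_)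
    (hquot.mono hball)).differentiableAt (ball_mem_nhds x (half_pos hρ))).differentiableWithinAt
  refine ((hf.comp (by fun_prop) fun z hz => hρs ?_).sub (hf.mono hball)).const_smul _
  rw [mem_ball, dist_eq_norm] at hz ⊢
  calc ‖z + t • v - x‖ = ‖(z - x) + t • v‖ := by congr 1; abel
    _ < ρ := (norm_add_le _ _).trans_lt (by linarith)

end HolomorphicLimits

section VectorValued

open Metric Complex
open scoped Real

variable {G κ : Type*} [NormedAddCommGroup G] [NormedSpace ℂ G] [CompleteSpace G] {U : Set ℂ}

lemma clm_circleIntegral_comm {f : ℂ → G} {c : ℂ} {R : ℝ} (φ : G →L[ℂ] ℂ)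
    (hf : CircleIntegrable f c R) : φ (∮ z in C(c, R), f z) = ∮ z in C(c, R), φ (f z) := by
  simp only [circleIntegral, ← φ.map_smul]
  exact (φ.intervalIntegral_comp_comm hf.out).symm

theorem differentiableOn_of_separating_clm {F : ℂ → G} (hU : IsOpen U) (hF : ContinuousOn F U)
    {φ : κ → G →L[ℂ] ℂ} (hφ : ∀ v, (∀ k, φ k v = 0) → v = 0)
    (hd : ∀ k, DifferentiableOn ℂ (fun τ => φ k (F τ)) U) : DifferentiableOn ℂ F U := by
  intro c hc
  obtain ⟨R, hR, hRU⟩ := nhds_basis_closedBall.mem_iff.1 (hU.mem_nhds hc)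
  lift R to NNReal using hR.le
  have hsphere : ContinuousOn F (sphere c R) := hF.mono (sphere_subset_closedBall.trans hRU)
  have hseries := hasFPowerSeriesOn_cauchy_integral (hsphere.circleIntegrable R.2) hR
  have hcauchy : ∀ w ∈ ball c R, (2 * π * I : ℂ)⁻¹ • (∮ z in C(c, R), (z - w)⁻¹ • F z) = F w := by
    intro w hw
    refine sub_eq_zero.1 (hφ _ fun k => ?_)
    have hint : CircleIntegrable (fun z => (z - w)⁻¹ • F z) c R := by
      refine ContinuousOn.circleIntegrable R.2 (ContinuousOn.smul ?_ hsphere)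
      refine (continuousOn_id.sub continuousOn_const).inv₀ fun z hz => sub_ne_zero.2 ?_
      rintro rfl
      exact (mem_ball.1 hw).ne (mem_sphere.1 hz)
    rw [map_sub, map_smul, clm_circleIntegral_comm (φ k) hint, sub_eq_zero]
    simp only [map_smul]
    exact ((hd k).mono hRU).diffContOnCl_ball subset_rfl
      |>.two_pi_i_inv_smul_circleIntegral_sub_inv_smul hw
  have hana := hseries.analyticAt.differentiableAt
  refine (hana.congr_of_eventuallyEq ?_).differentiableWithinAt
  filter_upwards [ball_mem_nhds c hR] with w hw using (hcauchy w hw).symm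

end VectorValued

section Taylor

variable {G : Type*} [NormedAddCommGroup G] [NormedSpace ℂ G] {W T : Set ℂ}

lemma iteratedDeriv_clm_comp {F' : Type*} [NormedAddCommGroup F'] [NormedSpace ℂ F']
    {F : ℂ → G} {c : ℂ} {k : ℕ} (φ : G →L[ℂ] F') (hF : ContDiffAt ℂ k F c) :
    iteratedDeriv k (fun τ => φ (F τ)) c = φ (iteratedDeriv k F c) := by
  have h := φ.iteratedFDeriv_comp_left hF le_rfl
  simp only [iteratedDeriv, ← Function.comp_def, h]
  rfl

variable [CompleteSpace G]

theorem mem_submodule_of_iteratedDeriv_mem {A : Submodule ℂ G} (hA : IsClosed (A : Set G))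
    {F : ℂ → G} (hW : IsOpen W) (hF : DifferentiableOn ℂ F W) (hT : IsPreconnected T)
    (hTW : T ⊆ W) {c : ℂ} (hc : c ∈ T) (hderiv : ∀ k, iteratedDeriv k F c ∈ A) {τ : ℂ}
    (hτ : τ ∈ T) : F τ ∈ A := by
  have : IsClosed (A : Set G) := hA
  have hana : AnalyticOnNhd ℂ F W := hF.analyticOnNhd hW
  have hquot : AnalyticOnNhd ℂ (fun w => A.mkQL (F w)) T := fun w hw =>
    (A.mkQL.analyticAt _).comp (hana w (hTW hw))
  have hzero : ∀ᶠ w in 𝓝 c, A.mkQL (F w) = 0 := by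
    rw [← analyticOrderAt_eq_top]
    refine ENat.eq_top_iff_forall_ge.2 fun m => ?_
    rw [natCast_le_analyticOrderAt_iff_iteratedDeriv_eq_zero (hquot c hc)]
    intro k _
    rw [iteratedDeriv_clm_comp A.mkQL (hana c (hTW hc)).contDiffAt]
    exact (Submodule.Quotient.mk_eq_zero A).2 (hderiv k)
  exact (Submodule.Quotient.mk_eq_zero A).1
    (hquot.eqOn_zero_of_preconnected_of_eventuallyEq_zero hT hc hzero hτ)

end Taylor

section PolyRestrict

variable {n : ℕ} (L : Set (Fin n → ℂ))

/-- Restriction of polynomials on `ℂⁿ` to continuous functions on `L`. -/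
def polyRestrict : MvPolynomial (Fin n) ℂ →ₐ[ℂ] C(L, ℂ) :=
  MvPolynomial.aeval fun i => ⟨fun z => z.1 i, (continuous_apply i).comp continuous_subtype_val⟩

variable {L}

lemma polyRestrict_apply (P : MvPolynomial (Fin n) ℂ) (z : L) :
    polyRestrict L P z = mvEval P z := by
  change ContinuousMap.evalAlgHom ℂ ℂ z (polyRestrict L P) = _
  rw [polyRestrict, ← AlgHom.comp_apply, MvPolynomial.comp_aeval]
  rfl

end PolyRestrict

section PartialDerivative

variable {n : ℕ} {s : Set (Fin n → ℂ)} {f : (Fin n → ℂ) → ℂ}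

lemma differentiableOn_pd (hs : IsOpen s) (hf : DifferentiableOn ℂ f s) (i : Fin n) :
    DifferentiableOn ℂ (pd i f) s :=
  differentiableOn_fderiv_apply hs hf (Pi.single i 1)

lemma fderiv_apply_eq_sum_pd (z v : Fin n → ℂ) : fderiv ℂ f z v = ∑ i, v i * pd i f z := by
  conv_lhs => rw [pi_eq_sum_univ' v]
  simp [pd, map_sum]

end PartialDerivative

section Dilation

variable {n : ℕ} {L V : Set (Fin n → ℂ)} {z₀ : Fin n → ℂ} {f : (Fin n → ℂ) → ℂ}

/-- The function `z ↦ f (z₀ + τ (z - z₀))` on `L`, as an element of `C(L, ℂ)` depending on `τ`. It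
is `0` by convention where this is not continuous on `L`. -/
def dilation (L : Set (Fin n → ℂ)) (z₀ : Fin n → ℂ) (f : (Fin n → ℂ) → ℂ) (τ : ℂ) : C(L, ℂ) :=
  ContinuousMap.mkD (L.domRestrict fun z => f (z₀ + τ • (z - z₀))) 0

/-- The parameters `τ` for which the dilation of `L` by the factor `τ` about `z₀` stays in `V`;
there `dilation L z₀ f` is holomorphic when `f` is holomorphic on `V`. -/
def dilationParameters (L V : Set (Fin n → ℂ)) (z₀ : Fin n → ℂ) : Set ℂ :=
  {τ | ∀ z ∈ L, z₀ + τ • (z - z₀) ∈ V}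

lemma isOpen_dilationParameters (hL : IsCompact L) (hV : IsOpen V) :
    IsOpen (dilationParameters L V z₀) := by
  refine isOpen_iff_eventually.2 fun τ hτ =>
    hL.eventually_forall_of_forall_eventually fun z hz => ?_
  exact ContinuousAt.eventually_mem (f := fun p : ℂ × (Fin n → ℂ) => z₀ + p.1 • (p.2 - z₀))
    (by fun_prop) (hV.mem_nhds (hτ z hz))

lemma dilation_apply (hf : ContinuousOn f V) {τ : ℂ} (hτ : τ ∈ dilationParameters L V z₀)
    (z : L) : dilation L z₀ f τ z = f (z₀ + τ • (z.1 - z₀)) :=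
  ContinuousMap.mkD_apply_of_continuousOn (hf.comp (by fun_prop) hτ)

lemma continuousOn_dilation (hf : ContinuousOn f V) :
    ContinuousOn (dilation L z₀ f) (dilationParameters L V z₀) :=
  ContinuousMap.continuousOn_mkD_restrict_of_uncurry
    (fun (τ : ℂ) (z : Fin n → ℂ) => f (z₀ + τ • (z - z₀))) 0
    (hf.comp (by fun_prop) fun p hp => hp.1 p.2 hp.2)

lemma dilation_zero (f : (Fin n → ℂ) → ℂ) :
    dilation L z₀ f 0 = polyRestrict L (MvPolynomial.C (f z₀)) := by
  ext z
  rw [polyRestrict_apply]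
  simp [dilation, mvEval, ContinuousMap.mkD_apply_of_continuousOn continuousOn_const]

lemma hasDerivAt_dilation_apply (hV : IsOpen V) (hf : DifferentiableOn ℂ f V) {τ : ℂ}
    (hτ : τ ∈ dilationParameters L V z₀) (z : L) :
    HasDerivAt (fun τ => f (z₀ + τ • (z.1 - z₀)))
      (∑ i, (z.1 - z₀) i * pd i f (z₀ + τ • (z.1 - z₀))) τ := by
  rw [← fderiv_apply_eq_sum_pd]
  have hline : HasDerivAt (fun τ : ℂ => z₀ + τ • (z.1 - z₀)) (z.1 - z₀) τ := by
    simpa using ((hasDerivAt_id τ).smul_const (z.1 - z₀)).const_add z₀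
  exact (hf.differentiableAt (hV.mem_nhds (hτ z z.2))).hasFDerivAt.comp_hasDerivAt τ hline

section CompactDomain

variable [CompactSpace L]

lemma differentiableOn_dilation (hV : IsOpen V) (hf : DifferentiableOn ℂ f V) :
    DifferentiableOn ℂ (dilation L z₀ f) (dilationParameters L V z₀) := by
  have hW : IsOpen (dilationParameters L V z₀) :=
    isOpen_dilationParameters (isCompact_iff_compactSpace.2 ‹_›) hV
  refine differentiableOn_of_separating_clm hW (continuousOn_dilation hf.continuousOn)
    (φ := fun z : L => ContinuousMap.evalCLM ℂ z) (fun v hv => ContinuousMap.ext hv) fun z => ?_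
  refine DifferentiableOn.congr (fun τ hτ => ?_) fun τ hτ => dilation_apply hf.continuousOn hτ z
  exact (hasDerivAt_dilation_apply hV hf hτ z).differentiableAt.differentiableWithinAt

lemma deriv_dilation (hV : IsOpen V) (hf : DifferentiableOn ℂ f V) {τ : ℂ}
    (hτ : τ ∈ dilationParameters L V z₀) :
    deriv (dilation L z₀ f) τ =
      ∑ i, polyRestrict L (MvPolynomial.X i - MvPolynomial.C (z₀ i)) *
        dilation L z₀ (pd i f) τ := by
  have hW := (isOpen_dilationParameters (z₀ := z₀)
    (isCompact_iff_compactSpace.2 ‹_›) hV).mem_nhds hτ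
  ext z
  have hderiv := ((differentiableOn_dilation hV hf).differentiableAt hW).hasDerivAt
  have heval := (ContinuousMap.evalCLM ℂ z).hasFDerivAt.comp_hasDerivAt τ hderiv
  have hpoint : HasDerivAt (fun τ => dilation L z₀ f τ z)
      (∑ i, (z.1 - z₀) i * pd i f (z₀ + τ • (z.1 - z₀))) τ :=
    (hasDerivAt_dilation_apply hV hf hτ z).congr_of_eventuallyEq <| by
      filter_upwards [hW] with w hw using dilation_apply hf.continuousOn hw z
  refine (heval.unique hpoint).trans ?_
  rw [ContinuousMap.sum_apply]
  refine Finset.sum_congr rfl fun i _ => ?_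
  rw [ContinuousMap.mul_apply, polyRestrict_apply,
    dilation_apply (differentiableOn_pd hV hf i).continuousOn hτ]
  simp [mvEval]

lemma iteratedDeriv_dilation_mem_range (hV : IsOpen V) (hz₀ : z₀ ∈ V)
    (hf : DifferentiableOn ℂ f V) (k : ℕ) :
    iteratedDeriv k (dilation L z₀ f) 0 ∈ (polyRestrict L).range := by
  have h0 : (0 : ℂ) ∈ dilationParameters L V z₀ := fun z _ => by simpa using hz₀
  have hW := isOpen_dilationParameters (z₀ := z₀) (isCompact_iff_compactSpace.2 ‹_›) hV (L := L)
  induction k generalizing f with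
  | zero => exact ⟨_, (dilation_zero f).symm⟩
  | succ k ih =>
    have hsmooth : ∀ i, ContDiffAt ℂ k (dilation L z₀ (pd i f)) 0 := fun i =>
      ((differentiableOn_dilation hV (differentiableOn_pd hV hf i)).analyticAt
        (hW.mem_nhds h0)).contDiffAt
    have hderiv : deriv (dilation L z₀ f) =ᶠ[𝓝 0] fun τ =>
        ∑ i, polyRestrict L (MvPolynomial.X i - MvPolynomial.C (z₀ i)) *
          dilation L z₀ (pd i f) τ := by
      filter_upwards [hW.mem_nhds h0] with τ hτ using deriv_dilation hV hf hτ
    rw [iteratedDeriv_succ', hderiv.iteratedDeriv_eq,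
      iteratedDeriv_fun_sum fun i _ => contDiffAt_const.mul (hsmooth i)]
    refine sum_mem fun i _ => ?_
    rw [iteratedDeriv_const_mul _ (hsmooth i)]
    exact mul_mem ⟨_, rfl⟩ (ih (differentiableOn_pd hV hf i))

end CompactDomain

theorem exists_polynomial_approx_of_starConvex (hV : IsOpen V) (hstar : StarConvex ℝ z₀ V)
    (hz₀ : z₀ ∈ V) (hf : DifferentiableOn ℂ f V) (hL : IsCompact L) (hLV : L ⊆ V) {ε : ℝ}
    (hε : 0 < ε) :
    ∃ P : MvPolynomial (Fin n) ℂ, ∀ z ∈ L, ‖mvEval P z - f z‖ < ε := by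
  have : CompactSpace L := isCompact_iff_compactSpace.1 hL
  have hsegment : IsPreconnected ((fun t : ℝ => (t : ℂ)) '' Icc 0 1) :=
    isPreconnected_Icc.image _ (by fun_prop)
  have hparam : (fun t : ℝ => (t : ℂ)) '' Icc 0 1 ⊆ dilationParameters L V z₀ := by
    rintro _ ⟨t, ht, rfl⟩ z hz
    exact hstar.add_smul_sub_mem (hLV hz) ht.1 ht.2
  have hone : (1 : ℂ) ∈ (fun t : ℝ => (t : ℂ)) '' Icc 0 1 := ⟨1, by simp, by simp⟩
  have hmem : dilation L z₀ f 1 ∈ ((polyRestrict L).range).topologicalClosure :=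
    mem_submodule_of_iteratedDeriv_mem
      (A := Subalgebra.toSubmodule (polyRestrict L).range.topologicalClosure)
      (Subalgebra.isClosed_topologicalClosure _) (isOpen_dilationParameters hL hV)
      (differentiableOn_dilation hV hf) hsegment hparam (c := 0) ⟨0, by simp, by simp⟩
      (fun k => Subalgebra.le_topologicalClosure _ (iteratedDeriv_dilation_mem_range hV hz₀ hf k))
      hone
  obtain ⟨_, ⟨P, rfl⟩, hP⟩ := Metric.mem_closure_iff.1 hmem ε hε
  refine ⟨P, fun z hz => ?_⟩
  have h := (ContinuousMap.dist_apply_le_dist (⟨z, hz⟩ : L)).trans_lt hP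
  rw [dist_comm, dilation_apply hf.continuousOn (hparam hone), dist_eq_norm] at h
  simpa [polyRestrict_apply] using h

end Dilation

section StepPolynomial

open Polynomial

lemma isUnit_aeval_of_roots_mem {A : Type*} [NormedRing A] [NormedAlgebra ℂ A]
    [CompleteSpace A] {S : Subalgebra ℂ A} (hS : IsClosed (S : Set A)) (x : S) {T : Set ℂ}
    (hT : IsPreconnected T) (hunbdd : ¬ Bornology.IsBounded T)
    (hdisj : Disjoint T (spectrum ℂ (x : A))) {p : ℂ[X]} (hp : ∀ w, p.IsRoot w → w ∈ T) :
    IsUnit (aeval x p) := by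
  have : CompleteSpace S := hS.completeSpace_coe
  nontriviality S
  rw [← spectrum.zero_notMem_iff ℂ, spectrum.map_polynomial_aeval]
  rintro ⟨w, hw, hroot⟩
  exact hunbdd <| (Subalgebra.spectrum_isBounded_connectedComponentIn S x hw).subset <|
    hT.subset_connectedComponentIn (hp w hroot) hdisj.subset_compl_right

lemma exists_polynomial_approx_div {S T : Set ℂ} (hS : IsCompact S) (hT : IsPreconnected T)
    (hunbdd : ¬ Bornology.IsBounded T) (hdisj : Disjoint T S) {p : ℂ[X]}
    (hp : ∀ w, p.IsRoot w → w ∈ T) (q : ℂ[X]) {ε : ℝ} (hε : 0 < ε) :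
    ∃ r : ℂ[X], ∀ w ∈ S, ‖r.eval w - q.eval w / p.eval w‖ < ε := by
  have : CompactSpace S := isCompact_iff_compactSpace.1 hS
  set R : Subalgebra ℂ C(S, ℂ) := (polynomialFunctions S).topologicalClosure
  have hmem : ∀ r : ℂ[X], r.toContinuousMapOnAlgHom S ∈ R := fun r =>
    Subalgebra.le_topologicalClosure _ ⟨r, trivial, rfl⟩
  set x : R := ⟨toContinuousMapOnAlgHom S X, hmem X⟩
  have haeval : ((aeval x p : R) : C(S, ℂ)) = toContinuousMapOnAlgHom S p := by
    refine (aeval_algHom_apply R.val x p).symm.trans ?_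
    refine (aeval_algHom_apply (toContinuousMapOnAlgHom S) X p).trans ?_
    rw [aeval_X_left_apply]
  have hspec : Disjoint T (spectrum ℂ (x : C(S, ℂ))) := by
    rw [ContinuousMap.spectrum_eq_range]
    refine hdisj.mono_right ?_
    rintro _ ⟨w, rfl⟩
    simp [x]
  obtain ⟨y, hy⟩ := (isUnit_aeval_of_roots_mem (Subalgebra.isClosed_topologicalClosure _) x hT
    hunbdd hspec hp).exists_right_inv
  obtain ⟨_, ⟨r, -, rfl⟩, hr⟩ := Metric.mem_closure_iff.1 (mul_mem (hmem q) y.2) ε hε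
  refine ⟨r, fun w hw => ?_⟩
  have hinv : p.eval w * y.1 ⟨w, hw⟩ = 1 := by
    have := congrArg (fun g : R => g.1 ⟨w, hw⟩) hy
    simpa [haeval] using this
  have hdiv : q.eval w / p.eval w = q.eval w * y.1 ⟨w, hw⟩ := by
    rw [div_eq_mul_inv, ← eq_inv_of_mul_eq_one_right hinv]
  have h := (ContinuousMap.dist_apply_le_dist (⟨w, hw⟩ : S)).trans_lt hr
  rw [dist_comm, dist_eq_norm] at h
  rw [hdiv]
  simpa using h

lemma norm_pow_div_pow_add_pow_le {a b : ℂ} {q : ℝ} {m : ℕ} (hq : 0 ≤ q) (hab : ‖a‖ ≤ q * ‖b‖)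
    (hm : q ^ m ≤ 1 / 2) : ‖a ^ m / (a ^ m + b ^ m)‖ ≤ 2 * q ^ m := by
  have ha : ‖a ^ m‖ ≤ q ^ m * ‖b ^ m‖ := by
    rw [norm_pow, norm_pow, ← mul_pow]
    gcongr
  have hden : ‖b ^ m‖ / 2 ≤ ‖a ^ m + b ^ m‖ := by
    have := norm_sub_le_norm_add (b ^ m) (a ^ m)
    rw [add_comm] at this
    nlinarith [norm_nonneg (b ^ m)]
  rw [norm_div]
  refine div_le_of_le_mul₀ (norm_nonneg _) (by positivity) (ha.trans ?_)
  nlinarith [pow_nonneg hq m]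

lemma exists_norm_one_add_le_mul {K : Set ℂ} (hK : IsCompact K) (hre : ∀ w ∈ K, w.re < 0) :
    ∃ q ∈ Ico (0 : ℝ) 1, ∀ w ∈ K, ‖1 + w‖ ≤ q * ‖1 - w‖ := by
  have hlt : ∀ w ∈ K, ‖1 + w‖ < ‖1 - w‖ := fun w hw => by
    rw [← sq_lt_sq₀ (norm_nonneg _) (norm_nonneg _), Complex.sq_norm, Complex.sq_norm,
      Complex.normSq_apply, Complex.normSq_apply]
    simp only [Complex.add_re, Complex.sub_re, Complex.one_re, Complex.add_im, Complex.sub_im,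
      Complex.one_im]
    nlinarith [hre w hw]
  have hpos : ∀ w ∈ K, 0 < ‖1 - w‖ := fun w hw => (norm_nonneg _).trans_lt (hlt w hw)
  obtain ⟨δ, hδ, hδK⟩ := hK.exists_forall_le' (f := fun w => 1 - ‖1 + w‖ / ‖1 - w‖) (a := 0)
    (continuousOn_const.sub <|
      ContinuousOn.div (by fun_prop) (by fun_prop) fun w hw => (hpos w hw).ne')
    fun w hw => sub_pos.2 ((div_lt_one (hpos w hw)).2 (hlt w hw))
  refine ⟨max 0 (1 - δ), ⟨le_max_left _ _, max_lt one_pos (by linarith)⟩, fun w hw => ?_⟩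
  rw [← div_le_iff₀ (hpos w hw)]
  exact le_max_of_le_right (by linarith [hδK w hw])

lemma re_eq_zero_of_pow_add_pow_eq_zero {w : ℂ} {m : ℕ} (hm : m ≠ 0)
    (hw : (1 + w) ^ m + (1 - w) ^ m = 0) : w.re = 0 := by
  have hnorm : ‖1 + w‖ = ‖1 - w‖ := by
    refine (pow_left_inj₀ (norm_nonneg _) (norm_nonneg _) hm).1 ?_
    rw [← norm_pow, ← norm_pow, eq_neg_of_add_eq_zero_left hw, norm_neg]
  have hsq := congrArg (· ^ 2) hnorm
  simp only [Complex.sq_norm, Complex.normSq_apply, Complex.add_re, Complex.sub_re, Complex.one_re,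
    Complex.add_im, Complex.sub_im, Complex.one_im] at hsq
  linarith

lemma isPreconnected_re_eq_zero : IsPreconnected {w : ℂ | w.re = 0} :=
  (convex_hyperplane Complex.reLm.isLinear 0).isPreconnected

lemma not_isBounded_re_eq_zero : ¬ Bornology.IsBounded {w : ℂ | w.re = 0} := by
  intro h
  obtain ⟨C, hC⟩ := h.exists_norm_le
  have := hC ((|C| + 1 : ℝ) * Complex.I) (by simp)
  rw [norm_mul, Complex.norm_I, mul_one, Complex.norm_real, Real.norm_of_nonneg (by positivity)]
    at this
  linarith [le_abs_self C]

theorem exists_polynomial_near_step {A B : Set ℂ} (hA : IsCompact A) (hB : IsCompact B)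
    (hAre : ∀ w ∈ A, w.re < 0) (hBre : ∀ w ∈ B, 0 < w.re) {ε : ℝ} (hε : 0 < ε) :
    ∃ p : ℂ[X], (∀ w ∈ A, ‖p.eval w‖ < ε) ∧ ∀ w ∈ B, ‖p.eval w - 1‖ < ε := by
  obtain ⟨a, ⟨ha0, ha1⟩, hAa⟩ := exists_norm_one_add_le_mul hA hAre
  obtain ⟨b, ⟨-, hb1⟩, hBb⟩ := exists_norm_one_add_le_mul (K := (fun w => -w) '' B)
    (hB.image continuous_neg) (by rintro _ ⟨w, hw, rfl⟩; simpa using hBre w hw)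
  simp only [forall_mem_image, ← sub_eq_add_neg, sub_neg_eq_add] at hBb
  set q := max a b
  have hq0 : 0 ≤ q := le_max_of_le_left ha0
  obtain ⟨m, hm⟩ := exists_pow_lt_of_lt_one (show 0 < min (ε / 4) (1 / 2) by positivity)
    (max_lt ha1 hb1)
  obtain ⟨hmε, hmhalf⟩ := lt_min_iff.1 hm
  have hm0 : m ≠ 0 := by rintro rfl; norm_num at hmhalf
  have hdisj : Disjoint {w : ℂ | w.re = 0} (A ∪ B) := by
    refine Set.disjoint_left.2 fun w hw hAB => ?_
    exact hAB.elim (fun h => (hAre w h).ne hw) fun h => (hBre w h).ne' hw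
  have hroots : ∀ w, ((1 + X : ℂ[X]) ^ m + (1 - X) ^ m).IsRoot w → w ∈ {w : ℂ | w.re = 0} :=
    fun w hw => re_eq_zero_of_pow_add_pow_eq_zero hm0 (by simpa using hw)
  obtain ⟨p, hp⟩ := exists_polynomial_approx_div (hA.union hB) isPreconnected_re_eq_zero
    not_isBounded_re_eq_zero hdisj hroots ((1 + X) ^ m) (half_pos hε)
  simp only [eval_add, eval_pow, eval_sub, eval_one, eval_X] at hp
  refine ⟨p, fun w hw => ?_, fun w hw => ?_⟩
  · have hbound := norm_pow_div_pow_add_pow_le hq0 ((hAa w hw).trans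
      (by gcongr; exact le_max_left a b)) hmhalf.le
    have hsum := norm_add_le_of_le (hp w (Or.inl hw)).le hbound
    rw [sub_add_cancel] at hsum
    linarith
  · have hbound := norm_pow_div_pow_add_pow_le hq0 ((hBb hw).trans
      (by gcongr; exact le_max_right a b)) hmhalf.le
    have hden : (1 - w) ^ m + (1 + w) ^ m ≠ 0 := fun h =>
      (hBre w hw).ne' (re_eq_zero_of_pow_add_pow_eq_zero hm0 (by rwa [add_comm]))
    have hsplit : p.eval w - 1 = (p.eval w - (1 + w) ^ m / ((1 + w) ^ m + (1 - w) ^ m)) -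
        (1 - w) ^ m / ((1 - w) ^ m + (1 + w) ^ m) := by
      rw [add_comm ((1 + w) ^ m), sub_sub, ← add_div, add_comm ((1 + w) ^ m), div_self hden]
    have hsum := norm_sub_le_of_le (hp w (Or.inr hw)).le hbound
    rw [← hsplit] at hsum
    linarith

end StepPolynomial

section TwoSidedApproximation

open MvPolynomial

lemma exists_clm_strict_separation {E : Type*} [NormedAddCommGroup E] [NormedSpace ℂ E]
    {K L Ω : Set E} (hΩo : IsOpen Ω) (hΩ : Convex ℝ Ω) (hK : Convex ℝ K) (hKΩ : Disjoint Ω K)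
    (hL : IsCompact L) (hLΩ : L ⊆ Ω) :
    ∃ (l : E →L[ℂ] ℂ) (c : ℝ), (∀ z ∈ L, (l z).re < c) ∧ ∀ z ∈ K, c < (l z).re := by
  obtain ⟨l, u, hlΩ, hlK⟩ := RCLike.geometric_hahn_banach_open (𝕜 := ℂ) hΩ hΩo hK hKΩ
  obtain ⟨δ, hδ, hlL⟩ := hL.exists_forall_le' (f := fun z => u - (l z).re) (a := 0)
    (by fun_prop) fun z hz => sub_pos.2 (hlΩ z (hLΩ hz))
  exact ⟨l, u - δ / 2, fun z hz => by linarith [hlL z hz],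
    fun z hz => (sub_lt_self u (half_pos hδ)).trans_le (hlK z hz)⟩

variable {n : ℕ}

lemma exists_mvEval_eq_clm (l : (Fin n → ℂ) →L[ℂ] ℂ) :
    ∃ Q : MvPolynomial (Fin n) ℂ, mvEval Q = l := by
  refine ⟨∑ i, X i * C (l (Pi.single i 1)), funext fun z => ?_⟩
  conv_rhs => rw [pi_eq_sum_univ' z]
  simp [mvEval, map_sum]

lemma mvEval_aeval (Q : MvPolynomial (Fin n) ℂ) (p : Polynomial ℂ) (z : Fin n → ℂ) :
    mvEval (Polynomial.aeval Q p) z = p.eval (mvEval Q z) := by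
  simpa [mvEval, coe_aeval_eq_eval] using (Polynomial.aeval_algHom_apply (aeval z) Q p).symm

lemma differentiable_mvEval (P : MvPolynomial (Fin n) ℂ) : Differentiable ℂ (mvEval P) :=
  fun z => (AnalyticOnNhd.eval_mvPolynomial P z (mem_univ z)).differentiableAt

lemma continuous_mvEval (P : MvPolynomial (Fin n) ℂ) : Continuous (mvEval P) :=
  (differentiable_mvEval P).continuous

variable {K L Ω : Set (Fin n → ℂ)}

lemma exists_polynomial_near_indicator (hΩo : IsOpen Ω) (hΩ : Convex ℝ Ω) (hK : IsCompact K)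
    (hKc : Convex ℝ K) (hKΩ : Disjoint Ω K) (hL : IsCompact L) (hLΩ : L ⊆ Ω) {ε : ℝ}
    (hε : 0 < ε) :
    ∃ H : MvPolynomial (Fin n) ℂ,
      (∀ z ∈ L, ‖mvEval H z‖ < ε) ∧ ∀ z ∈ K, ‖mvEval H z - 1‖ < ε := by
  obtain ⟨l, c, hlL, hlK⟩ := exists_clm_strict_separation hΩo hΩ hKc hKΩ hL hLΩ
  obtain ⟨Q, hQ⟩ := exists_mvEval_eq_clm l
  have hshift : ∀ z, mvEval (Q - C (c : ℂ)) z = l z - c := fun z => by simp [← hQ, mvEval]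
  have hcont : Continuous fun z => l z - c := by fun_prop
  obtain ⟨p, hpL, hpK⟩ := exists_polynomial_near_step (hL.image hcont) (hK.image hcont)
    (by simpa using hlL) (by simpa using hlK) hε
  refine ⟨Polynomial.aeval (Q - C (c : ℂ)) p, fun z hz => ?_, fun z hz => ?_⟩
  · rw [mvEval_aeval, hshift]
    exact hpL _ (mem_image_of_mem _ hz)
  · rw [mvEval_aeval, hshift]
    exact hpK _ (mem_image_of_mem _ hz)

theorem exists_polynomial_approx_pair (hΩo : IsOpen Ω) (hΩ : Convex ℝ Ω) (hK : IsCompact K)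
    (hKc : Convex ℝ K) (hKΩ : Disjoint Ω K) (hL : IsCompact L) (hLΩ : L ⊆ Ω)
    {g : (Fin n → ℂ) → ℂ} (hg : DifferentiableOn ℂ g Ω) (P : MvPolynomial (Fin n) ℂ) {ε : ℝ}
    (hε : 0 < ε) :
    ∃ Q : MvPolynomial (Fin n) ℂ,
      (∀ z ∈ L, ‖mvEval Q z - g z‖ < ε) ∧ ∀ z ∈ K, ‖mvEval Q z - mvEval P z‖ < ε := by
  rcases L.eq_empty_or_nonempty with rfl | ⟨z₀, hz₀⟩
  · exact ⟨P, by simp, by simpa using fun _ _ => hε⟩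
  obtain ⟨G, hG⟩ := exists_polynomial_approx_of_starConvex hΩo (hΩ.starConvex (hLΩ hz₀))
    (hLΩ hz₀) hg hL hLΩ (half_pos hε)
  obtain ⟨M, hM⟩ := (hL.union hK).exists_bound_of_continuousOn
    (continuous_mvEval (P - G)).continuousOn
  obtain ⟨δ, hδ, hMδ⟩ := exists_pos_mul_lt (half_pos hε) M
  obtain ⟨H, hHL, hHK⟩ := exists_polynomial_near_indicator hΩo hΩ hK hKc hKΩ hL hLΩ hδ
  refine ⟨G + (P - G) * H, fun z hz => ?_, fun z hz => ?_⟩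
  · have heq : mvEval (G + (P - G) * H) z - g z =
        (mvEval G z - g z) + mvEval (P - G) z * mvEval H z := by
      simp only [mvEval, map_add, map_mul]
      ring
    have hcorr : ‖mvEval (P - G) z * mvEval H z‖ ≤ M * δ :=
      norm_mul_le_of_le (hM z (Or.inl hz)) (hHL z hz).le
    rw [heq]
    exact (norm_add_le _ _).trans_lt (by linarith [hG z hz])
  · have heq : mvEval (G + (P - G) * H) z - mvEval P z =
        mvEval (P - G) z * (mvEval H z - 1) := by
      simp only [mvEval, map_add, map_mul, map_sub]
      ring
    rw [heq]
    linarith [norm_mul_le_of_le (hM z (Or.inr hz)) (hHK z hz).le]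

end TwoSidedApproximation

section TaylorPolynomial

open MvPolynomial

variable {n : ℕ}

lemma pd_mvEval (i : Fin n) (P : MvPolynomial (Fin n) ℂ) :
    pd i (mvEval P) = mvEval (pderiv i P) := by
  funext z
  induction P using MvPolynomial.induction_on with
  | C a =>
    have hconst : mvEval (C a : MvPolynomial (Fin n) ℂ) = fun _ => a := funext fun w => eval_C a
    simp [pd, hconst, mvEval]
  | add P Q hP hQ =>
    have hadd : mvEval (P + Q) = mvEval P + mvEval Q := funext fun w => map_add (eval w) P Q
    rw [pd, hadd, fderiv_add (differentiable_mvEval P z) (differentiable_mvEval Q z),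
      add_apply, ← pd, ← pd, hP, hQ]
    simp [mvEval]
  | mul_X P j hP =>
    have hmul : mvEval (P * X j) = mvEval P * fun w => w j := funext fun w => by simp [mvEval]
    rw [pd, hmul, fderiv_mul (differentiable_mvEval P z) (differentiableAt_apply j z),
      (hasFDerivAt_apply j z).fderiv, add_apply, smul_apply, smul_apply, ← pd, hP]
    rcases eq_or_ne j i with rfl | hji
    · simp [mvEval, mul_comm]
    · simp [mvEval, pderiv_X_of_ne hji, Pi.single_eq_of_ne hji, mul_comm]

/-- The operator `D^ℓ` on polynomials. -/
def iteratedPDeriv (ℓ : Fin n → ℕ) : Module.End ℂ (MvPolynomial (Fin n) ℂ) :=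
  ((List.finRange n).map fun i => (pderiv i).toLinearMap ^ ℓ i).prod

lemma Dml_mvEval (ℓ : Fin n → ℕ) (P : MvPolynomial (Fin n) ℂ) :
    Dml ℓ (mvEval P) = mvEval (iteratedPDeriv ℓ P) := by
  unfold Dml iteratedPDeriv
  induction List.finRange n with
  | nil => rfl
  | cons i l ih =>
    rw [List.foldr_cons, ih, List.map_cons, List.prod_cons, Module.End.mul_apply,
      Module.End.pow_apply]
    have hsemi : Function.Semiconj mvEval (pderiv i) (pd i) := fun P => (pd_mvEval i P).symm
    exact (hsemi.iterate_right (ℓ i) _).symm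

lemma pderiv_pow_monomial (i : Fin n) (k : ℕ) (m : Fin n →₀ ℕ) (c : ℂ) :
    ((pderiv i).toLinearMap ^ k) (monomial m c) =
      monomial (m - Finsupp.single i k) (c * (m i).descFactorial k) := by
  induction k with
  | zero => simp
  | succ k ih =>
    rw [pow_succ', Module.End.mul_apply, ih, Derivation.coeFn_coe, pderiv_monomial]
    congr 1
    · rw [tsub_tsub, ← Finsupp.single_add]
    · rw [Finsupp.tsub_apply, Finsupp.single_eq_same, Nat.descFactorial_succ, Nat.cast_mul]
      ring

lemma iteratedPDeriv_monomial (ℓ : Fin n → ℕ) (m : Fin n →₀ ℕ) (c : ℂ) :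
    iteratedPDeriv ℓ (monomial m c) = monomial (m - Finsupp.equivFunOnFinite.symm ℓ)
      (c * ∏ i, ((m i).descFactorial (ℓ i) : ℂ)) := by
  have hlist : ∀ l : List (Fin n), l.Nodup →
      (l.map fun i => (pderiv i).toLinearMap ^ ℓ i).prod (monomial m c) =
        monomial (m - (l.map fun i => Finsupp.single i (ℓ i)).sum)
          (c * (l.map fun i => ((m i).descFactorial (ℓ i) : ℂ)).prod) := by
    intro l hl
    induction l with
    | nil => simp
    | cons i l ih =>
      obtain ⟨hil, hl⟩ := List.nodup_cons.1 hl
      have hzero : (l.map fun i => Finsupp.single i (ℓ i)).sum i = 0 := by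
        rw [← Finsupp.applyAddHom_apply, map_list_sum, List.map_map]
        refine List.sum_eq_zero fun x hx => ?_
        obtain ⟨j, hj, rfl⟩ := List.mem_map.1 hx
        exact Finsupp.single_eq_of_ne (ne_of_mem_of_not_mem hj hil).symm
      rw [List.map_cons, List.prod_cons, Module.End.mul_apply, ih hl, pderiv_pow_monomial,
        Finsupp.tsub_apply, hzero, tsub_zero, List.map_cons, List.sum_cons, List.map_cons,
        List.prod_cons, tsub_tsub, add_comm]
      congr 1
      ring
  rw [iteratedPDeriv, hlist _ (List.nodup_finRange n), ← List.ofFn_eq_map, ← List.ofFn_eq_map,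
    List.sum_ofFn, List.prod_ofFn]
  congr 2
  ext i
  simp [Finsupp.single_apply]

lemma sum_prod_choose_mul_sub_pow (m : Fin n → ℕ) (z ζ : Fin n → ℂ) :
    ∑ ℓ ∈ Fintype.piFinset fun i => Finset.range (m i + 1),
      ∏ i, ((z i - ζ i) ^ ℓ i * ζ i ^ (m i - ℓ i) * (m i).choose (ℓ i)) = ∏ i, z i ^ m i := by
  rw [← Finset.prod_univ_sum (fun i => Finset.range (m i + 1))
    fun i k => (z i - ζ i) ^ k * ζ i ^ (m i - k) * (m i).choose k]
  simp only [← add_pow, sub_add_cancel]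

variable {Nj : ℕ → Fin n → ℕ}

lemma pSum_add (P Q : MvPolynomial (Fin n) ℂ) (ζ z : Fin n → ℂ) (lam : ℕ) :
    pSum Nj (mvEval (P + Q)) ζ lam z =
      pSum Nj (mvEval P) ζ lam z + pSum Nj (mvEval Q) ζ lam z := by
  simp only [pSum, pSumExt, Dml_mvEval, ← Finset.sum_add_distrib, mvEval, map_add]
  exact Finset.sum_congr rfl fun j _ => by ring

lemma pSum_monomial (m : Fin n →₀ ℕ) (c : ℂ) (ζ z : Fin n → ℂ) (lam : ℕ) :
    pSum Nj (mvEval (monomial m c)) ζ lam z = ∑ j ∈ Finset.range (lam + 1), c * ∏ i,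
      ((z i - ζ i) ^ Nj j i * ζ i ^ (m i - Nj j i) * (m i).choose (Nj j i)) := by
  rw [pSum, pSumExt]
  refine Finset.sum_congr rfl fun j _ => ?_
  have hfact : (∏ i, ((Nj j i).factorial : ℂ)) ≠ 0 :=
    Finset.prod_ne_zero_iff.2 fun i _ => Nat.cast_ne_zero.2 (Nat.factorial_ne_zero _)
  have hprod : ∀ k : Fin n →₀ ℕ, (k.prod fun i e => ζ i ^ e) = ∏ i, ζ i ^ k i :=
    fun k => k.prod_fintype _ fun _ => pow_zero _
  simp only [Dml_mvEval, iteratedPDeriv_monomial, mvEval, eval_monomial,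
    Nat.descFactorial_eq_factorial_mul_choose, Nat.cast_mul, Nat.cast_prod,
    Finset.prod_mul_distrib, hprod, Finsupp.tsub_apply,
    Finsupp.equivFunOnFinite_symm_apply_apply]
  field_simp

lemma eventually_subset_image_range (hNj : Function.Surjective Nj) (B : Finset (Fin n → ℕ)) :
    ∀ᶠ lam in atTop, B ⊆ (Finset.range (lam + 1)).image Nj :=
  ((tendsto_finset_image_atTop_atTop (Function.rightInverse_surjInv hNj)).comp
    (tendsto_finset_range.comp (tendsto_add_atTop_nat 1))).eventually_ge_atTop B

theorem eventually_pSum_mvEval_eq (hNj : Function.Bijective Nj) (P : MvPolynomial (Fin n) ℂ) :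
    ∀ᶠ lam in atTop, ∀ ζ z, pSum Nj (mvEval P) ζ lam z = mvEval P z := by
  induction P using MvPolynomial.induction_on' with
  | add P Q hP hQ =>
    filter_upwards [hP, hQ] with lam hP hQ ζ z
    rw [pSum_add, hP, hQ]
    exact (map_add (eval z) P Q).symm
  | monomial m c =>
    filter_upwards [eventually_subset_image_range hNj.2
      (Fintype.piFinset fun i => Finset.range (m i + 1))] with lam hlam ζ z
    rw [pSum_monomial, ← Finset.mul_sum, ← Finset.sum_image (g := Nj) (f := fun ℓ => ∏ i,
      ((z i - ζ i) ^ ℓ i * ζ i ^ (m i - ℓ i) * (m i).choose (ℓ i))) hNj.1.injOn,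
      ← Finset.sum_subset hlam, sum_prod_choose_mul_sub_pow]
    · simp [mvEval, eval_monomial, Finsupp.prod_fintype]
    · intro ℓ _ hℓ
      obtain ⟨i, hi⟩ : ∃ i, m i < ℓ i := by simpa using hℓ
      exact Finset.prod_eq_zero (Finset.mem_univ i) (by simp [Nat.choose_eq_zero_of_lt hi])

end TaylorPolynomial

namespace Ospace

variable {n : ℕ} {Ω : Set (Fin n → ℂ)}

/-- The restriction map `O(Ω) → C(Ω, ℂ)`, which induces the topology of `O(Ω)`. -/
def toContinuousMap (f : Ospace n Ω) : C(Ω, ℂ) :=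
  ⟨Ω.domRestrict f.1, f.2.continuousOn.domRestrict⟩

lemma isInducing_toContinuousMap : IsInducing (toContinuousMap : Ospace n Ω → C(Ω, ℂ)) := ⟨rfl⟩

lemma tendsto_nhds_iff (hΩ : IsOpen Ω) {ι : Type*} {l : Filter ι} {F : ι → Ospace n Ω}
    {f : Ospace n Ω} :
    Tendsto F l (𝓝 f) ↔ TendstoLocallyUniformlyOn (fun i => (F i).1) f.1 l Ω := by
  have : LocallyCompactSpace Ω := hΩ.locallyCompactSpace
  rw [isInducing_toContinuousMap.tendsto_nhds_iff,
    ContinuousMap.tendsto_iff_tendstoLocallyUniformly,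
    tendstoLocallyUniformlyOn_iff_tendstoLocallyUniformly_comp_coe]
  rfl

lemma exists_continuous_pd (hΩ : IsOpen Ω) (i : Fin n) :
    ∃ Φ : Ospace n Ω → Ospace n Ω, Continuous Φ ∧ ∀ f, (Φ f).1 = pd i f.1 := by
  refine ⟨fun f => ⟨pd i f.1, differentiableOn_pd hΩ f.2 i⟩, ?_, fun _ => rfl⟩
  refine continuous_iff_continuousAt.2 fun f => (tendsto_nhds_iff hΩ).2 ?_
  have hfderiv := tendstoLocallyUniformlyOn_fderiv hΩ
    (Eventually.of_forall fun g : Ospace n Ω => g.2) f.2 ((tendsto_nhds_iff hΩ).1 tendsto_id)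
  exact (ContinuousLinearMap.apply ℂ ℂ (Pi.single i 1 : Fin n → ℂ)).uniformContinuous
    |>.comp_tendstoLocallyUniformlyOn hfderiv

lemma exists_continuous_Dml (hΩ : IsOpen Ω) (ℓ : Fin n → ℕ) :
    ∃ Φ : Ospace n Ω → Ospace n Ω, Continuous Φ ∧ ∀ f, (Φ f).1 = Dml ℓ f.1 := by
  unfold Dml
  induction List.finRange n with
  | nil => exact ⟨id, continuous_id, fun _ => rfl⟩
  | cons i l ih =>
    obtain ⟨Φ, hΦ, hΦl⟩ := ih
    obtain ⟨Ψ, hΨ, hΨi⟩ := exists_continuous_pd hΩ i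
    have hsemi : Function.Semiconj Subtype.val Ψ (pd i) := hΨi
    refine ⟨Ψ^[ℓ i] ∘ Φ, (hΨ.iterate _).comp hΦ, fun f => ?_⟩
    rw [List.foldr_cons, ← hΦl f]
    exact hsemi.iterate_right (ℓ i) (Φ f)

lemma continuousAt_eval (hΩ : IsOpen Ω) (f : Ospace n Ω) {z : Fin n → ℂ} (hz : z ∈ Ω) :
    ContinuousAt (fun q : Ospace n Ω × (Fin n → ℂ) => q.1.1 q.2) (f, z) := by
  have hfst : Tendsto Prod.fst (𝓝 (f, z)) (𝓝 f) := continuousAt_fst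
  have hsnd : Tendsto Prod.snd (𝓝 (f, z)) (𝓝[Ω] z) :=
    tendsto_nhdsWithin_iff.2 ⟨continuousAt_snd, continuousAt_snd.eventually_mem (hΩ.mem_nhds hz)⟩
  exact ((tendsto_nhds_iff hΩ).1 hfst).tendsto_comp (f.2.continuousOn z hz) hz hsnd

lemma continuousAt_pSum (hΩ : IsOpen Ω) (Nj : ℕ → Fin n → ℕ) (lam : ℕ) (f : Ospace n Ω)
    {ζ : Fin n → ℂ} (hζ : ζ ∈ Ω) (z : Fin n → ℂ) :
    ContinuousAt (fun q : Ospace n Ω × (Fin n → ℂ) × (Fin n → ℂ) => pSum Nj q.1.1 q.2.1 lam q.2.2)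
      (f, ζ, z) := by
  refine tendsto_finsetSum (Finset.range (lam + 1)) fun j _ => ?_
  obtain ⟨Φ, hΦ, hΦj⟩ := exists_continuous_Dml hΩ (Nj j)
  simp only [← hΦj]
  have hcoeff : ContinuousAt
      (fun q : Ospace n Ω × (Fin n → ℂ) × (Fin n → ℂ) => (Φ q.1).1 q.2.1) (f, ζ, z) :=
    (continuousAt_eval hΩ (Φ f) hζ).comp
      (f := fun q : Ospace n Ω × (Fin n → ℂ) × (Fin n → ℂ) => (Φ q.1, q.2.1))
      (x := (f, ζ, z)) (by fun_prop)
  exact (continuousAt_const.mul hcoeff).mul (by fun_prop)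

lemma isClosed_range_toContinuousMap (hΩ : IsOpen Ω) :
    IsClosed (range (toContinuousMap : Ospace n Ω → C(Ω, ℂ))) := by
  have : LocallyCompactSpace Ω := hΩ.locallyCompactSpace
  refine isClosed_of_closure_subset fun g hg => ?_
  obtain ⟨u, hu, hug⟩ := mem_closure_iff_seq_limit.1 hg
  choose F hF using hu
  have hext : Function.extend Subtype.val g 0 ∘ ((↑) : Ω → Fin n → ℂ) = g :=
    Function.extend_comp Subtype.val_injective _ _
  have hlim : TendstoLocallyUniformlyOn (fun k => (F k).1) (Function.extend Subtype.val g 0)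
      atTop Ω := by
    rw [tendstoLocallyUniformlyOn_iff_tendstoLocallyUniformly_comp_coe, hext]
    refine (ContinuousMap.tendsto_iff_tendstoLocallyUniformly.1 hug).congr fun k z => ?_
    rw [← hF]
    rfl
  have hdiff := differentiableOn_of_tendstoLocallyUniformlyOn hΩ
    (Eventually.of_forall fun k => (F k).2) hlim
  exact ⟨⟨_, hdiff⟩, ContinuousMap.ext (congrFun hext)⟩

theorem baireSpace (hΩ : IsOpen Ω) : BaireSpace (Ospace n Ω) := by
  have : LocallyCompactSpace Ω := hΩ.locallyCompactSpace
  let _ : UniformSpace (Ospace n Ω) :=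
    (UniformSpace.comap toContinuousMap inferInstance).replaceTopology rfl
  have : CompleteSpace (Ospace n Ω) :=
    (completeSpace_iff_isComplete_range (f := toContinuousMap) ⟨rfl⟩).2
      (isClosed_range_toContinuousMap hΩ).isComplete
  have : (uniformity (Ospace n Ω)).IsCountablyGenerated := Filter.comap.isCountablyGenerated _ _
  infer_instance

end Ospace

section CountableFamilies

open Metric

lemma exists_seq_isCompact_eventually_superset {X : Type*} [TopologicalSpace X]
    [LocallyCompactSpace X] [SecondCountableTopology X] {Ω : Set X} (hΩ : IsOpen Ω) :
    ∃ Ls : ℕ → Set X, (∀ s, IsCompact (Ls s)) ∧ (∀ s, Ls s ⊆ Ω) ∧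
      ∀ L ⊆ Ω, IsCompact L → ∀ᶠ s in atTop, L ⊆ Ls s := by
  have : LocallyCompactSpace Ω := hΩ.locallyCompactSpace
  let exhaustion := CompactExhaustion.choice Ω
  refine ⟨fun s => (↑) '' exhaustion s,
    fun s => (exhaustion.isCompact s).image continuous_subtype_val,
    fun s => Subtype.coe_image_subset Ω _, fun L hLΩ hL => ?_⟩
  lift L to Set Ω using hLΩ
  obtain ⟨s, hs⟩ := exhaustion.exists_superset_of_isCompact (Subtype.isCompact_iff.2 hL)
  filter_upwards [eventually_ge_atTop s] with t hst
  exact image_mono (hs.trans (exhaustion.subset hst))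

lemma exists_finset_thickening_convexHull {E ι : Type*} [SeminormedAddCommGroup E]
    [NormedSpace ℝ E] {d : ι → E} (hd : DenseRange d) {K : Set E} (hK : IsCompact K)
    (hKc : Convex ℝ K) {η : ℝ} (hη : 0 < η) :
    ∃ t : Finset ι, K ⊆ thickening η (convexHull ℝ (d '' t)) ∧
      convexHull ℝ (d '' t) ⊆ thickening η K := by
  have hcover : K ⊆ ⋃ i ∈ d ⁻¹' thickening η K, ball (d i) η := fun x hx => by
    obtain ⟨i, hi⟩ := hd.exists_dist_lt x hη
    exact mem_iUnion₂.2 ⟨i, mem_thickening_iff.2 ⟨x, hx, by rwa [dist_comm]⟩, hi⟩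
  obtain ⟨b, hbK, hb, hKb⟩ := hK.elim_finite_subcover_image (fun _ _ => isOpen_ball) hcover
  lift b to Finset ι using hb
  refine ⟨b, fun x hx => ?_, convexHull_min (image_subset_iff.2 hbK) (hKc.thickening η)⟩
  obtain ⟨i, hi, hxi⟩ := mem_iUnion₂.1 (hKb hx)
  exact mem_thickening_iff.2 ⟨d i, subset_convexHull ℝ _ (mem_image_of_mem d hi), hxi⟩

lemma exists_countable_convex_superset {E : Type*} [NormedAddCommGroup E] [NormedSpace ℝ E]
    [ProperSpace E] {F : Set E} (hF : IsClosed F) :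
    ∃ 𝒞 : Set (Set E), 𝒞.Countable ∧
      (∀ C ∈ 𝒞, IsCompact C ∧ Convex ℝ C ∧ Disjoint C F) ∧
      ∀ K, IsCompact K → Convex ℝ K → Disjoint K F → ∃ C ∈ 𝒞, K ⊆ C := by
  let d := TopologicalSpace.denseSeq E
  let polytope : Finset ℕ × ℕ → Set E := fun i =>
    cthickening (1 / ((i.2 : ℝ) + 1)) (convexHull ℝ (d '' i.1))
  refine ⟨{C ∈ range polytope | Disjoint C F}, (countable_range polytope).mono (sep_subset _ _),
    ?_, fun K hK hKc hKF => ?_⟩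
  · rintro _ ⟨⟨⟨t, k⟩, rfl⟩, hdisj⟩
    exact ⟨((t.finite_toSet.image d).isCompact_convexHull (𝕜 := ℝ)).cthickening,
      (convex_convexHull ℝ _).cthickening _, hdisj⟩
  obtain ⟨δ, hδ, hdisj⟩ := hKF.exists_cthickenings hK hF
  obtain ⟨k, hk⟩ := exists_nat_one_div_lt (half_pos hδ)
  have hη : 0 < 1 / ((k : ℝ) + 1) := Nat.one_div_pos_of_nat
  obtain ⟨t, hKt, htK⟩ := exists_finset_thickening_convexHull
    (TopologicalSpace.denseRange_denseSeq E) hK hKc hη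
  have hsub : polytope (t, k) ⊆ cthickening δ K := calc
    _ ⊆ cthickening (1 / ((k : ℝ) + 1)) (thickening (1 / ((k : ℝ) + 1)) K) :=
      cthickening_subset_of_subset _ htK
    _ ⊆ cthickening (1 / ((k : ℝ) + 1) + 1 / ((k : ℝ) + 1)) K :=
      cthickening_thickening_subset hη.le _ _
    _ ⊆ cthickening δ K := cthickening_mono (by linarith) _
  exact ⟨_, ⟨mem_range_self (t, k), hdisj.mono hsub (self_subset_cthickening _)⟩,
    hKt.trans (thickening_subset_cthickening _ _)⟩

lemma exists_countable_polynomials {n : ℕ} {K : Set (Fin n → ℂ)} (hK : IsCompact K) :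
    ∃ 𝒟 : Set (MvPolynomial (Fin n) ℂ), 𝒟.Countable ∧
      ∀ P, ∀ ε > 0, ∃ Q ∈ 𝒟, ∀ z ∈ K, ‖mvEval Q z - mvEval P z‖ < ε := by
  have : CompactSpace K := isCompact_iff_compactSpace.1 hK
  have : Nonempty (range (polyRestrict K)) := (range_nonempty _).to_subtype
  let d := TopologicalSpace.denseSeq (range (polyRestrict K))
  refine ⟨range fun i => rangeSplitting (polyRestrict K) (d i), countable_range _,
    fun P ε hε => ?_⟩
  obtain ⟨i, hi⟩ := (TopologicalSpace.denseRange_denseSeq (range (polyRestrict K))).exists_dist_lt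
    ⟨polyRestrict K P, mem_range_self P⟩ hε
  refine ⟨_, mem_range_self i, fun z hz => ?_⟩
  rw [Subtype.dist_eq, dist_comm, ← apply_rangeSplitting (polyRestrict K),
    ContinuousMap.dist_lt_iff hε] at hi
  simpa only [polyRestrict_apply, dist_eq_norm] using hi ⟨z, hz⟩

end CountableFamilies

section Convergence

lemma isOpen_setOf_forall_mem_lt {X Y : Type*} [TopologicalSpace X] [TopologicalSpace Y]
    {K : Set Y} (hK : IsCompact K) {Φ : X × Y → ℝ} (hΦ : ∀ x, ∀ y ∈ K, ContinuousAt Φ (x, y))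
    (ε : ℝ) : IsOpen {x | ∀ y ∈ K, Φ (x, y) < ε} := by
  refine isOpen_iff_eventually.2 fun x hx => ?_
  exact hK.eventually_forall_of_forall_eventually fun y hy =>
    (hΦ x y hy).eventually_lt continuousAt_const (hx y hy)

lemma tendstoUniformlyOn_of_eventually_dist_lt {ι α β : Type*} [PseudoMetricSpace β]
    {l : Filter ι} {F : ι → α → β} {f : α → β} {s : Set α} {u : ι → ℝ} (hu : Tendsto u l (𝓝 0))
    (hF : ∀ᶠ i in l, ∀ x ∈ s, dist (F i x) (f x) < u i) : TendstoUniformlyOn F f l s := by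
  refine Metric.tendstoUniformlyOn_iff.2 fun ε hε => ?_
  filter_upwards [hF, hu.eventually_lt_const hε] with i hi hui x hx
  rw [dist_comm]
  exact (hi x hx).trans hui

lemma Ospace.dense_of_exists_norm_sub_lt {n : ℕ} {Ω : Set (Fin n → ℂ)} (hΩ : IsOpen Ω)
    {S : Set (Ospace n Ω)}
    (hS : ∀ f : Ospace n Ω, ∀ L ⊆ Ω, IsCompact L → ∀ ε > 0, ∃ g ∈ S, ∀ z ∈ L, ‖g.1 z - f.1 z‖ < ε) :
    Dense S := by
  intro f
  obtain ⟨Ls, hLs, hLsΩ, habsorb⟩ := exists_seq_isCompact_eventually_superset hΩ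
  choose g hgS hg using fun s : ℕ =>
    hS f (Ls s) (hLsΩ s) (hLs s) (1 / ((s : ℝ) + 1)) Nat.one_div_pos_of_nat
  refine mem_closure_of_tendsto (b := atTop) ((tendsto_nhds_iff hΩ).2 ?_) (Eventually.of_forall hgS)
  refine (tendstoLocallyUniformlyOn_iff_forall_isCompact hΩ).2 fun L hLΩ hL => ?_
  refine tendstoUniformlyOn_of_eventually_dist_lt tendsto_one_div_add_atTop_nhds_zero_nat ?_
  filter_upwards [habsorb L hLΩ hL] with s hs z hz
  rw [dist_eq_norm]
  exact hg s z (hs hz)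

end Convergence

section Universality

variable {n : ℕ} {Ω L K : Set (Fin n → ℂ)} {Nj : ℕ → Fin n → ℕ} {𝕄 : Set ℕ}

/-- The functions in `O(Ω)` one of whose Taylor partial sums, with index in `𝕄` and any center
in `L`, is `ε`-close to `P` on `K` and to the function itself on `L`. -/
def approximationSet (Nj : ℕ → Fin n → ℕ) (𝕄 : Set ℕ) (Ω L K : Set (Fin n → ℂ))
    (P : MvPolynomial (Fin n) ℂ) (ε : ℝ) : Set (Ospace n Ω) :=
  {f | ∃ lam ∈ 𝕄, (∀ q ∈ L ×ˢ K, ‖pSum Nj f.1 q.1 lam q.2 - mvEval P q.2‖ < ε) ∧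
    ∀ q ∈ L ×ˢ L, ‖pSum Nj f.1 q.1 lam q.2 - f.1 q.2‖ < ε}

/-- The functions in `O(Ω)` whose Taylor partial sums with indices in `𝕄` approximate every
polynomial on `K`, locally uniformly in the center of expansion, while converging back to the
function on compact subsets of `Ω`. -/
def universalSet (Nj : ℕ → Fin n → ℕ) (𝕄 : Set ℕ) (Ω K : Set (Fin n → ℂ)) :
    Set (Ospace n Ω) :=
  {f | ∀ P : MvPolynomial (Fin n) ℂ, ∃ lam : ℕ → ℕ, (∀ N, lam N ∈ 𝕄) ∧
    ∀ L : Set (Fin n → ℂ), L ⊆ Ω → IsCompact L →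
      TendstoUniformlyOn
        (fun N (q : (Fin n → ℂ) × (Fin n → ℂ)) => pSum Nj f.1 q.1 (lam N) q.2)
        (fun q => mvEval P q.2) atTop (L ×ˢ K) ∧
      TendstoUniformlyOn
        (fun N (q : (Fin n → ℂ) × (Fin n → ℂ)) => pSum Nj f.1 q.1 (lam N) q.2)
        (fun q => f.1 q.2) atTop (L ×ˢ L)}

lemma isOpen_approximationSet (hΩ : IsOpen Ω) (hL : IsCompact L) (hLΩ : L ⊆ Ω)
    (hK : IsCompact K) (P : MvPolynomial (Fin n) ℂ) (ε : ℝ) :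
    IsOpen (approximationSet Nj 𝕄 Ω L K P ε) := by
  simp only [approximationSet, ← exists_prop (a := _ ∈ 𝕄), ofPred_exists, ofPred_and]
  refine isOpen_biUnion fun lam _ =>
    (isOpen_setOf_forall_mem_lt (Φ := fun x : Ospace n Ω × (Fin n → ℂ) × (Fin n → ℂ) =>
      ‖pSum Nj x.1.1 x.2.1 lam x.2.2 - mvEval P x.2.2‖) (hL.prod hK) (fun f q hq => ?_) ε).inter
    (isOpen_setOf_forall_mem_lt (Φ := fun x : Ospace n Ω × (Fin n → ℂ) × (Fin n → ℂ) =>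
      ‖pSum Nj x.1.1 x.2.1 lam x.2.2 - x.1.1 x.2.2‖) (hL.prod hL) (fun f q hq => ?_) ε)
  · have hP := continuous_mvEval P
    exact ((Ospace.continuousAt_pSum hΩ Nj lam f (hLΩ hq.1) q.2).sub (by fun_prop)).norm
  · have heval : ContinuousAt
        (fun x : Ospace n Ω × (Fin n → ℂ) × (Fin n → ℂ) => x.1.1 x.2.2) (f, q) :=
      (Ospace.continuousAt_eval hΩ f (hLΩ hq.2)).comp
        (f := fun x : Ospace n Ω × (Fin n → ℂ) × (Fin n → ℂ) => (x.1, x.2.2))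
        (x := (f, q)) (by fun_prop)
    exact ((Ospace.continuousAt_pSum hΩ Nj lam f (hLΩ hq.1) q.2).sub heval).norm

lemma mem_approximationSet_of_polynomial (hNj : Function.Bijective Nj) (h𝕄 : 𝕄.Infinite)
    {P Q : MvPolynomial (Fin n) ℂ} {ε : ℝ} (hε : 0 < ε)
    (hQ : ∀ z ∈ K, ‖mvEval Q z - mvEval P z‖ < ε) :
    ⟨mvEval Q, (differentiable_mvEval Q).differentiableOn⟩ ∈
      approximationSet Nj 𝕄 Ω L K P ε := by
  obtain ⟨lam, hlam, hsum⟩ := (Nat.frequently_atTop_iff_infinite.2 h𝕄).and_eventually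
    (eventually_pSum_mvEval_eq hNj Q) |>.exists
  refine ⟨lam, hlam, fun q hq => ?_, fun q _ => ?_⟩
  · rw [hsum]
    exact hQ q.2 hq.2
  · rwa [hsum, sub_self, norm_zero]

lemma dense_approximationSet (hΩ : IsOpen Ω) (hΩc : Convex ℝ Ω) (hK : IsCompact K)
    (hKc : Convex ℝ K) (hKΩ : Disjoint K Ω) (hNj : Function.Bijective Nj) (h𝕄 : 𝕄.Infinite)
    (P : MvPolynomial (Fin n) ℂ) {ε : ℝ} (hε : 0 < ε) :
    Dense (approximationSet Nj 𝕄 Ω L K P ε) := by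
  refine Ospace.dense_of_exists_norm_sub_lt hΩ fun f L' hL'Ω hL' δ hδ => ?_
  obtain ⟨Q, hQf, hQP⟩ := exists_polynomial_approx_pair hΩ hΩc hK hKc hKΩ.symm hL' hL'Ω f.2 P
    (lt_min hε hδ)
  exact ⟨_, mem_approximationSet_of_polynomial hNj h𝕄 hε fun z hz =>
    (hQP z hz).trans_le (min_le_left ε δ), fun z hz => (hQf z hz).trans_le (min_le_right ε δ)⟩

lemma universalSet_anti {K' : Set (Fin n → ℂ)} (hKK' : K ⊆ K') :
    universalSet Nj 𝕄 Ω K' ⊆ universalSet Nj 𝕄 Ω K := fun f hf P => by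
  obtain ⟨lam, hlam, hconv⟩ := hf P
  exact ⟨lam, hlam, fun L hLΩ hL =>
    ⟨(hconv L hLΩ hL).1.mono (prod_mono_right hKK'), (hconv L hLΩ hL).2⟩⟩

lemma mem_universalSet_iff (hΩ : IsOpen Ω) {f : Ospace n Ω} :
    f ∈ universalSet Nj 𝕄 Ω K ↔
      ∀ P, ∀ L ⊆ Ω, IsCompact L → ∀ ε > 0, f ∈ approximationSet Nj 𝕄 Ω L K P ε := by
  refine ⟨fun hf P L hLΩ hL ε hε => ?_, fun hf P => ?_⟩
  · obtain ⟨lam, hlam, hconv⟩ := hf P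
    obtain ⟨hP, hself⟩ := hconv L hLΩ hL
    obtain ⟨N, hNP, hNself⟩ := ((Metric.tendstoUniformlyOn_iff.1 hP ε hε).and
      (Metric.tendstoUniformlyOn_iff.1 hself ε hε)).exists
    simp only [dist_eq_norm_sub'] at hNP hNself
    exact ⟨lam N, hlam N, hNP, hNself⟩
  · obtain ⟨Ls, hLs, hLsΩ, habsorb⟩ := exists_seq_isCompact_eventually_superset hΩ
    choose lam hlam hP hself using fun s : ℕ =>
      hf P (Ls s) (hLsΩ s) (hLs s) (1 / ((s : ℝ) + 1)) Nat.one_div_pos_of_nat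
    simp only [← dist_eq_norm] at hP hself
    refine ⟨lam, hlam, fun L hLΩ hL => ⟨?_, ?_⟩⟩ <;>
      refine tendstoUniformlyOn_of_eventually_dist_lt tendsto_one_div_add_atTop_nhds_zero_nat ?_
    · filter_upwards [habsorb L hLΩ hL] with s hs q hq
      exact hP s q (prod_mono_left hs hq)
    · filter_upwards [habsorb L hLΩ hL] with s hs q hq
      exact hself s q (prod_mono hs hs hq)

lemma approximationSet_subset {L' : Set (Fin n → ℂ)} (hL : L ⊆ L')
    {P Q : MvPolynomial (Fin n) ℂ} {δ ε : ℝ} (hδ : 0 ≤ δ)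
    (hQ : ∀ z ∈ K, ‖mvEval Q z - mvEval P z‖ ≤ δ) :
    approximationSet Nj 𝕄 Ω L' K Q ε ⊆ approximationSet Nj 𝕄 Ω L K P (ε + δ) := by
  rintro f ⟨lam, hlam, happrox, hself⟩
  refine ⟨lam, hlam, fun q hq => ?_, fun q hq => ?_⟩
  · calc
      _ ≤ ‖pSum Nj f.1 q.1 lam q.2 - mvEval Q q.2‖ + ‖mvEval Q q.2 - mvEval P q.2‖ :=
        norm_sub_le_norm_sub_add_norm_sub _ _ _
      _ < ε + δ := add_lt_add_of_lt_of_le (happrox q (prod_mono_left hL hq)) (hQ q.2 hq.2)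
  · exact (hself q (prod_mono hL hL hq)).trans_le (le_add_of_nonneg_right hδ)

lemma exists_countable_universalSet_eq_iInter (hΩ : IsOpen Ω) (hK : IsCompact K) :
    ∃ (𝒟 : Set (MvPolynomial (Fin n) ℂ)) (Ls : ℕ → Set (Fin n → ℂ)),
      𝒟.Countable ∧ (∀ s, IsCompact (Ls s)) ∧ (∀ s, Ls s ⊆ Ω) ∧
      universalSet Nj 𝕄 Ω K =
        ⋂ Q ∈ 𝒟, ⋂ s : ℕ, approximationSet Nj 𝕄 Ω (Ls s) K Q (1 / ((s : ℝ) + 1)) := by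
  obtain ⟨𝒟, h𝒟, hdense⟩ := exists_countable_polynomials hK
  obtain ⟨Ls, hLs, hLsΩ, habsorb⟩ := exists_seq_isCompact_eventually_superset hΩ
  refine ⟨𝒟, Ls, h𝒟, hLs, hLsΩ, Subset.antisymm (fun f hf => ?_) (fun f hf => ?_)⟩
  · exact mem_iInter₂.2 fun Q _ => mem_iInter.2 fun s =>
      (mem_universalSet_iff hΩ).1 hf Q (Ls s) (hLsΩ s) (hLs s) _ Nat.one_div_pos_of_nat
  · refine (mem_universalSet_iff hΩ).2 fun P L hLΩ hL ε hε => ?_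
    obtain ⟨s, hLs, hs⟩ := ((habsorb L hLΩ hL).and
      (tendsto_one_div_add_atTop_nhds_zero_nat.eventually_lt_const hε)).exists
    obtain ⟨Q, hQ𝒟, hQ⟩ := hdense P _ (sub_pos.2 hs)
    have hmem := approximationSet_subset hLs (sub_pos.2 hs).le (fun z hz => (hQ z hz).le)
      (mem_iInter.1 (mem_iInter₂.1 hf Q hQ𝒟) s)
    rwa [add_sub_cancel] at hmem

theorem isGδ_universalSet (hΩ : IsOpen Ω) (hK : IsCompact K) :
    IsGδ (universalSet Nj 𝕄 Ω K) := by
  obtain ⟨𝒟, Ls, h𝒟, hLs, hLsΩ, heq⟩ := exists_countable_universalSet_eq_iInter hΩ hK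
  rw [heq]
  exact .biInter h𝒟 fun Q _ => .iInter_of_isOpen fun s =>
    isOpen_approximationSet hΩ (hLs s) (hLsΩ s) hK Q _

theorem dense_universalSet (hΩ : IsOpen Ω) (hΩc : Convex ℝ Ω) (hK : IsCompact K)
    (hKc : Convex ℝ K) (hKΩ : Disjoint K Ω) (hNj : Function.Bijective Nj) (h𝕄 : 𝕄.Infinite) :
    Dense (universalSet Nj 𝕄 Ω K) := by
  have : BaireSpace (Ospace n Ω) := Ospace.baireSpace hΩ
  obtain ⟨𝒟, Ls, h𝒟, hLs, hLsΩ, heq⟩ := exists_countable_universalSet_eq_iInter hΩ hK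
  have hopen (Q : MvPolynomial (Fin n) ℂ) (s : ℕ) :
      IsOpen (approximationSet Nj 𝕄 Ω (Ls s) K Q (1 / ((s : ℝ) + 1))) :=
    isOpen_approximationSet hΩ (hLs s) (hLsΩ s) hK Q _
  rw [heq]
  exact dense_biInter_of_Gδ (fun Q _ => .iInter_of_isOpen (hopen Q)) h𝒟 fun Q _ =>
    dense_iInter_of_isOpen (hopen Q) fun s =>
      dense_approximationSet hΩ hΩc hK hKc hKΩ hNj h𝕄 Q Nat.one_div_pos_of_nat

theorem dense_biInter_universalSet (hΩ : IsOpen Ω) (hΩc : Convex ℝ Ω)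
    {𝒦 : Set (Set (Fin n → ℂ))} (h𝒦 : 𝒦.Countable)
    (h𝒦Ω : ∀ K ∈ 𝒦, IsCompact K ∧ Convex ℝ K ∧ Disjoint K Ω) (hNj : Function.Bijective Nj)
    (h𝕄 : 𝕄.Infinite) : Dense (⋂ K ∈ 𝒦, universalSet Nj 𝕄 Ω K) := by
  have : BaireSpace (Ospace n Ω) := Ospace.baireSpace hΩ
  refine dense_biInter_of_Gδ (fun K hK => isGδ_universalSet hΩ (h𝒦Ω K hK).1) h𝒦 fun K hK => ?_
  obtain ⟨hKcomp, hKc, hKΩ⟩ := h𝒦Ω K hK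
  exact dense_universalSet hΩ hΩc hKcomp hKc hKΩ hNj h𝕄

end Universality

/-- Remark 2.6: universality with the center of expansion `ζ` varying in
compact subsets of `Ω`. -/
theorem rem2_6 (n : ℕ) (𝕄 : Set ℕ) (h𝕄 : 𝕄.Infinite)
    (Ω : Set (Fin n → ℂ)) (hΩo : IsOpen Ω) (hΩcv : Convex ℝ Ω)
    (Km : ℕ → Set (Fin n → ℂ))
    (hKm : ∀ m, IsCompact (Km m) ∧ Convex ℝ (Km m) ∧ Km m ∩ Ω = ∅)
    (Nj : ℕ → Fin n → ℕ) (hNj : Function.Bijective Nj) :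
    ∃ U : Set (Ospace n Ω),
      U = {f : Ospace n Ω |
        ∀ K : Set (Fin n → ℂ), IsCompact K → Convex ℝ K →
          (K ∩ closure Ω = ∅ ∨ ∃ m, K = Km m) →
          ∀ P : MvPolynomial (Fin n) ℂ, ∃ lam : ℕ → ℕ, (∀ N, lam N ∈ 𝕄) ∧
            ∀ L : Set (Fin n → ℂ), L ⊆ Ω → IsCompact L →
              TendstoUniformlyOn
                (fun N (q : (Fin n → ℂ) × (Fin n → ℂ)) => pSum Nj f.1 q.1 (lam N) q.2)
                (fun q => mvEval P q.2) atTop (L ×ˢ K) ∧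
              TendstoUniformlyOn
                (fun N (q : (Fin n → ℂ) × (Fin n → ℂ)) => pSum Nj f.1 q.1 (lam N) q.2)
                (fun q => f.1 q.2) atTop (L ×ˢ L)} ∧
      U.Nonempty ∧ Dense U ∧ IsGδ U := by
  obtain ⟨𝒞, h𝒞, h𝒞F, h𝒞K⟩ := exists_countable_convex_superset (isClosed_closure (s := Ω))
  let 𝒦 := 𝒞 ∪ range Km
  have h𝒦 : 𝒦.Countable := h𝒞.union (countable_range Km)
  have h𝒦Ω : ∀ K ∈ 𝒦, IsCompact K ∧ Convex ℝ K ∧ Disjoint K Ω := by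
    rintro K (hK | ⟨m, rfl⟩)
    · exact (h𝒞F K hK).imp_right (And.imp_right (Disjoint.mono_right subset_closure))
    · exact (hKm m).imp_right (And.imp_right disjoint_iff_inter_eq_empty.2)
  have hdense : Dense (⋂ K ∈ 𝒦, universalSet Nj 𝕄 Ω K) :=
    dense_biInter_universalSet hΩo hΩcv h𝒦 h𝒦Ω hNj h𝕄
  have : Nonempty (Ospace n Ω) := ⟨⟨0, differentiableOn_const 0⟩⟩
  refine ⟨⋂ K ∈ 𝒦, universalSet Nj 𝕄 Ω K, Subset.antisymm (fun f hf K hK hKc hKΩ => ?_)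
    (fun f hf => mem_iInter₂.2 fun K hK => hf K (h𝒦Ω K hK).1 (h𝒦Ω K hK).2.1 ?_),
    hdense.nonempty, hdense, .biInter h𝒦 fun K hK => isGδ_universalSet hΩo (h𝒦Ω K hK).1⟩
  · obtain ⟨C, hC, hKC⟩ : ∃ C ∈ 𝒦, K ⊆ C := by
      rcases hKΩ with hKΩ | ⟨m, rfl⟩
      · obtain ⟨C, hC, hKC⟩ := h𝒞K K hK hKc (disjoint_iff_inter_eq_empty.2 hKΩ)
        exact ⟨C, .inl hC, hKC⟩
      · exact ⟨Km m, .inr ⟨m, rfl⟩, subset_rfl⟩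
    exact universalSet_anti hKC (mem_iInter₂.1 hf C hC)
  · rcases hK with hK | ⟨m, rfl⟩
    · exact .inl (disjoint_iff_inter_eq_empty.1 (h𝒞F K hK).2.2)
    · exact .inr ⟨m, rfl⟩

end
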